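/- 2 ∫_0^1 [K(√(1−t))]² K(√t) dt = [Γ(1/4)]⁸ / (192 π²). -/

import Mathlib

open Real MeasureTheory intervalIntegral

/-- Complete elliptic integral of the first kind. -/
noncomputable def ellipticK (k : ℝ) : ℝ :=
  ∫ θ in (0:ℝ)..(π/2), 1 / Real.sqrt (1 - k^2 * Real.sin θ ^ 2)

section helpers
open Set Filter Topology


/-- differentiation under the integral sign, compact interval -/
theorem hasDerivAt_param (F F' : ℝ → ℝ → ℝ) (b : ℝ) (hb : 0 ≤ b) (s : Set ℝ) (hs : IsOpen s)
    (hF : ∀ z ∈ s, ∀ θ, HasDerivAt (fun z => F z θ) (F' z θ) z)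
    (hFc : ∀ z ∈ s, Continuous (F z))
    (hF' : ContinuousOn (fun p : ℝ × ℝ => F' p.1 p.2) (s ×ˢ univ)) (z : ℝ) (hz : z ∈ s) :
    HasDerivAt (fun z => ∫ θ in (0:ℝ)..b, F z θ) (∫ θ in (0:ℝ)..b, F' z θ) z := by
  obtain ⟨ε, hε, hball⟩ := Metric.isOpen_iff.1 hs z hz
  have hsub : Metric.closedBall z (ε/2) ⊆ s :=
    (Metric.closedBall_subset_ball (by linarith)).trans hball
  have hcomp : IsCompact (Metric.closedBall z (ε/2) ×ˢ Icc (0:ℝ) b) :=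
    (isCompact_closedBall _ _).prod isCompact_Icc
  obtain ⟨C, hC⟩ := hcomp.exists_bound_of_continuousOn
    (hF'.mono (prod_mono hsub (subset_univ _)))
  have hF'z : Continuous (F' z) := by
    have : ContinuousOn (fun θ : ℝ => F' z θ) univ :=
      hF'.comp (f := fun θ : ℝ => (z, θ)) (by fun_prop) (fun θ _ => ⟨hz, mem_univ _⟩)
    exact continuousOn_univ.1 this
  refine (intervalIntegral.hasDerivAt_integral_of_dominated_loc_of_deriv_le (F := F) (F' := F')
    (s := Metric.closedBall z (ε/2)) (bound := fun _ => C) (Metric.closedBall_mem_nhds z (by linarith)) ?_ ?_ ?_ ?_ ?_ ?_).2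
  · filter_upwards [hs.mem_nhds hz] with x hx
    exact (hFc x hx).aestronglyMeasurable
  · exact (hFc z hz).intervalIntegrable _ _
  · exact hF'z.aestronglyMeasurable
  · refine Eventually.of_forall (fun θ hθ x hx => ?_)
    rw [uIoc_of_le hb] at hθ
    exact hC (x, θ) ⟨hx, hθ.1.le, hθ.2⟩
  · exact intervalIntegrable_const
  · exact Eventually.of_forall (fun θ hθ x hx => hF x (hsub hx) θ)

noncomputable def yy (z : ℝ) : ℝ := ∫ θ in (0:ℝ)..(π/2), 1 / √(1 + z * sin θ ^ 2)
noncomputable def y1 (z : ℝ) : ℝ := ∫ θ in (0:ℝ)..(π/2), -(sin θ ^ 2) / (2 * ((1 + z * sin θ ^ 2) * √(1 + z * sin θ ^ 2)))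
noncomputable def y2 (z : ℝ) : ℝ := ∫ θ in (0:ℝ)..(π/2), 3 * (sin θ ^ 4) / (4 * ((1 + z * sin θ ^ 2)^2 * √(1 + z * sin θ ^ 2)))
noncomputable def qq (n : ℕ) (z : ℝ) : ℝ :=
  ∫ θ in (0:ℝ)..(π/2), (sin θ * cos θ) ^ (2*n) / ((z + sin θ ^ 2)^n * √(z + sin θ ^ 2))
noncomputable def qq1 (n : ℕ) (z : ℝ) : ℝ :=
  ∫ θ in (0:ℝ)..(π/2), -(n + 1/2) * (sin θ * cos θ) ^ (2*n) / ((z + sin θ ^ 2)^(n+1) * √(z + sin θ ^ 2))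

theorem vpos {z : ℝ} (hz : 0 < z) (θ : ℝ) : 0 < 1 + z * sin θ ^ 2 := by positivity
theorem wpos {z : ℝ} (hz : 0 < z) (θ : ℝ) : 0 < z + sin θ ^ 2 := by positivity

theorem hasDerivAt_yy {z : ℝ} (hz : 0 < z) : HasDerivAt yy (y1 z) z := by
  refine hasDerivAt_param (fun z θ => 1 / √(1 + z * sin θ ^ 2))
    (fun z θ => -(sin θ ^ 2) / (2 * ((1 + z * sin θ ^ 2) * √(1 + z * sin θ ^ 2)))) (π/2) (by positivity) (Ioi 0) isOpen_Ioi ?_ ?_ ?_ z hz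
  · intro z hz θ
    have hv := vpos hz θ
    have h1 : HasDerivAt (fun z => 1 + z * sin θ ^ 2) (sin θ ^ 2) z := by
      simpa using ((hasDerivAt_id z).mul_const (sin θ ^ 2)).const_add 1
    have := (h1.sqrt hv.ne').inv (sqrt_pos.2 hv).ne'
    simp only [one_div]
    refine this.congr_deriv ?_
    rw [sq_sqrt hv.le]; field_simp
  · intro z hz
    exact continuous_const.div (by fun_prop) (fun θ => (sqrt_pos.2 (vpos hz θ)).ne')
  · refine ContinuousOn.div (by fun_prop) (by fun_prop) ?_
    rintro ⟨z, θ⟩ ⟨hz, -⟩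
    have hv := vpos hz θ
    positivity

theorem hasDerivAt_y1 {z : ℝ} (hz : 0 < z) : HasDerivAt y1 (y2 z) z := by
  refine hasDerivAt_param (fun z θ => -(sin θ ^ 2) / (2 * ((1 + z * sin θ ^ 2) * √(1 + z * sin θ ^ 2))))
    (fun z θ => 3 * (sin θ ^ 4) / (4 * ((1 + z * sin θ ^ 2)^2 * √(1 + z * sin θ ^ 2)))) (π/2) (by positivity) (Ioi 0) isOpen_Ioi ?_ ?_ ?_ z hz
  · intro z hz θ
    have hv := vpos hz θ
    have h1 : HasDerivAt (fun z => 1 + z * sin θ ^ 2) (sin θ ^ 2) z := by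
      simpa using ((hasDerivAt_id z).mul_const (sin θ ^ 2)).const_add 1
    have hs := sqrt_pos.2 hv
    have h2 := ((h1.mul (h1.sqrt hv.ne')).const_mul 2).inv (by simp only [Pi.mul_apply]; positivity)
    have h3 := h2.const_mul (-(sin θ ^2))
    simp only [div_eq_mul_inv (-(sin θ ^2))]
    refine h3.congr_deriv ?_
    simp only [Pi.mul_apply]
    have e := sq_sqrt hv.le
    set r := √(1 + z * sin θ ^ 2) with hr
    rw [← e]
    field_simp
    ring
  · intro z hz
    exact Continuous.div (by fun_prop) (by fun_prop) (fun θ => by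
      have hv := vpos hz θ
      positivity)
  · refine ContinuousOn.div (by fun_prop) (by fun_prop) ?_
    rintro ⟨z, θ⟩ ⟨hz, -⟩
    have hv := vpos hz θ
    positivity

theorem hasDerivAt_qq (n : ℕ) {z : ℝ} (hz : 0 < z) : HasDerivAt (qq n) (qq1 n z) z := by
  refine hasDerivAt_param (fun z θ => (sin θ * cos θ) ^ (2*n) / ((z + sin θ ^ 2)^n * √(z + sin θ ^ 2)))
    (fun z θ => -(n + 1/2) * (sin θ * cos θ) ^ (2*n) / ((z + sin θ ^ 2)^(n+1) * √(z + sin θ ^ 2))) (π/2) (by positivity) (Ioi 0) isOpen_Ioi ?_ ?_ ?_ z hz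
  · intro z hz θ
    have hv := wpos hz θ
    have h1 : HasDerivAt (fun z => z + sin θ ^ 2) 1 z := by
      simpa using (hasDerivAt_id z).add_const (sin θ ^ 2)
    have hs := sqrt_pos.2 hv
    have h2 := ((h1.pow n).mul (h1.sqrt hv.ne')).inv (by simp only [Pi.mul_apply, Pi.pow_apply]; positivity)
    have h3 := h2.const_mul ((sin θ * cos θ) ^ (2*n))
    simp only [div_eq_mul_inv ((sin θ * cos θ) ^ (2*n))]
    refine h3.congr_deriv ?_
    simp only [Pi.mul_apply, Pi.pow_apply]
    have e := sq_sqrt hv.le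
    set r := √(z + sin θ ^ 2) with hr
    rw [← e]
    rcases n with _ | n
    · simp; field_simp
    · simp only [Nat.add_sub_cancel]
      push_cast
      field_simp
      ring
  · intro z hz
    exact Continuous.div (by fun_prop) (by fun_prop) (fun θ => by
      have hv := wpos hz θ
      positivity)
  · refine ContinuousOn.div (by fun_prop) (by fun_prop) ?_
    rintro ⟨z, θ⟩ ⟨hz, -⟩
    have hv := wpos hz θ
    positivity


theorem cont_y0 {z : ℝ} (hz : 0 < z) : Continuous (fun θ => 1 / √(1 + z * sin θ ^ 2)) :=
  Continuous.div (by fun_prop) (by fun_prop) (fun θ => by have hv := vpos hz θ; positivity)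
theorem cont_y1 {z : ℝ} (hz : 0 < z) : Continuous (fun θ => -(sin θ ^ 2) / (2 * ((1 + z * sin θ ^ 2) * √(1 + z * sin θ ^ 2)))) :=
  Continuous.div (by fun_prop) (by fun_prop) (fun θ => by have hv := vpos hz θ; positivity)
theorem cont_y2 {z : ℝ} (hz : 0 < z) : Continuous (fun θ => 3 * (sin θ ^ 4) / (4 * ((1 + z * sin θ ^ 2)^2 * √(1 + z * sin θ ^ 2)))) :=
  Continuous.div (by fun_prop) (by fun_prop) (fun θ => by have hv := vpos hz θ; positivity)
theorem cont_q0 (n : ℕ) {z : ℝ} (hz : 0 < z) : Continuous (fun θ => (sin θ * cos θ) ^ (2*n) / ((z + sin θ ^ 2)^n * √(z + sin θ ^ 2))) :=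
  Continuous.div (by fun_prop) (by fun_prop) (fun θ => by have hv := wpos hz θ; positivity)
theorem cont_q1 (n : ℕ) {z : ℝ} (hz : 0 < z) : Continuous (fun θ => -(n + 1/2) * (sin θ * cos θ) ^ (2*n) / ((z + sin θ ^ 2)^(n+1) * √(z + sin θ ^ 2))) :=
  Continuous.div (by fun_prop) (by fun_prop) (fun θ => by have hv := wpos hz θ; positivity)

/-- linear combination of three integrals vanishing because integrand is an exact derivative -/
theorem comb_zero (f g h G : ℝ → ℝ) (a b c : ℝ) (hf : Continuous f) (hg : Continuous g) (hh : Continuous h)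
    (hG : ∀ θ, HasDerivAt G (a * f θ + b * g θ + c * h θ) θ) (h0 : G 0 = 0) (h1 : G (π/2) = 0) :
    a * (∫ θ in (0:ℝ)..(π/2), f θ) + b * (∫ θ in (0:ℝ)..(π/2), g θ) + c * (∫ θ in (0:ℝ)..(π/2), h θ) = 0 := by
  have e := integral_eq_sub_of_hasDerivAt (a := 0) (b := π/2) (f := G) (fun θ _ => hG θ)
    (Continuous.intervalIntegrable (by fun_prop) _ _)
  rw [h0, h1, sub_zero] at e
  have i1 : IntervalIntegrable (fun θ => a * f θ) volume 0 (π/2) := Continuous.intervalIntegrable (by fun_prop) _ _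
  have i2 : IntervalIntegrable (fun θ => b * g θ) volume 0 (π/2) := Continuous.intervalIntegrable (by fun_prop) _ _
  have i3 : IntervalIntegrable (fun θ => c * h θ) volume 0 (π/2) := Continuous.intervalIntegrable (by fun_prop) _ _
  rw [intervalIntegral.integral_add (i1.add i2) i3, intervalIntegral.integral_add i1 i2, intervalIntegral.integral_const_mul,
    intervalIntegral.integral_const_mul, intervalIntegral.integral_const_mul] at e
  exact e

theorem hasDerivAt_sc (θ : ℝ) : HasDerivAt (fun θ => sin θ * cos θ) (1 - 2 * sin θ ^ 2) θ := by
  refine ((hasDerivAt_sin θ).mul (hasDerivAt_cos θ)).congr_deriv ?_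
  nlinarith [sin_sq_add_cos_sq θ]

theorem hasDerivAt_s2 (θ : ℝ) : HasDerivAt (fun θ => sin θ ^ 2) (2 * (sin θ * cos θ)) θ := by
  refine ((hasDerivAt_sin θ).pow 2).congr_deriv ?_
  simp; ring

theorem y_ode {z : ℝ} (hz : 0 < z) : z * (1 + z) * y2 z + (1 + 2 * z) * y1 z + (1/4) * yy z = 0 := by
  refine comb_zero _ _ _ (fun θ => (1/4) * ((sin θ * cos θ) / ((1 + z * sin θ ^ 2) * √(1 + z * sin θ ^ 2)))) _ _ _
    (cont_y2 hz) (cont_y1 hz) (cont_y0 hz) ?_ (by simp) (by simp)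
  intro θ
  have hv := vpos hz θ
  have hs := sqrt_pos.2 hv
  have h1 : HasDerivAt (fun θ => 1 + z * sin θ ^ 2) (z * (2 * (sin θ * cos θ))) θ :=
    ((hasDerivAt_s2 θ).const_mul z).const_add 1
  have h2 := (((hasDerivAt_sc θ).div (h1.mul (h1.sqrt hv.ne')) (by simp only [Pi.mul_apply]; positivity)).const_mul (1/4))
  refine h2.congr_deriv ?_
  simp only [Pi.mul_apply]
  have e := sq_sqrt hv.le
  have e2 : (sin θ * cos θ)^2 = sin θ ^ 2 * (1 - sin θ ^ 2) := by
    rw [mul_pow, cos_sq']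
  set r := √(1 + z * sin θ ^ 2) with hr
  have e4 : sin θ ^ 4 = (sin θ ^ 2)^2 := by ring
  rw [e4]
  generalize sin θ * cos θ = p at *
  generalize sin θ ^ 2 = S at *
  have : r ≠ 0 := hs.ne'
  have hne : (1 + z * S) ≠ 0 := hv.ne'
  rw [← e] at hne ⊢
  field_simp
  linear_combination (-6*z)*e2 + (-2*r^2+6*z*S)*e


theorem nat_pow_pred (n : ℕ) {w : ℝ} (hw : w ≠ 0) : (n:ℝ) * w^(n-1) = n * w^n / w := by
  rcases n with _ | n
  · simp
  · simp only [Nat.add_sub_cancel]; field_simp; ring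

theorem ladder2 (n : ℕ) {z : ℝ} (hz : 0 < z) :
    2 * (z * (1 + z)) * qq1 n z + (-(n + 1/2)) * qq (n+1) z + (n + 1/2) * (1 + 2 * z) * qq n z = 0 := by
  refine comb_zero _ _ _ (fun θ => -(1/2) * ((sin θ * cos θ)^(2*n+1) / ((z + sin θ ^ 2)^n * √(z + sin θ ^ 2)))) _ _ _
    (cont_q1 n hz) (cont_q0 (n+1) hz) (cont_q0 n hz) ?_ (by simp) (by simp)
  intro θ
  have hv := wpos hz θ
  have hs := sqrt_pos.2 hv
  have h1 : HasDerivAt (fun θ => z + sin θ ^ 2) (2 * (sin θ * cos θ)) θ :=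
    (hasDerivAt_s2 θ).const_add z
  have h2 := (((hasDerivAt_sc θ).pow (2*n+1)).div ((h1.pow n).mul (h1.sqrt hv.ne')) (by simp only [Pi.mul_apply, Pi.pow_apply]; positivity)).const_mul (-(1/2))
  refine h2.congr_deriv ?_
  simp only [Pi.mul_apply, Pi.pow_apply]
  have e := sq_sqrt hv.le
  have e2 : (sin θ * cos θ)^2 = sin θ ^ 2 * (1 - sin θ ^ 2) := by
    rw [mul_pow, cos_sq']
  rw [nat_pow_pred n hv.ne', Nat.add_sub_cancel, show 2 * (n+1) = 2*n + 2 by ring]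
  simp only [pow_succ _ (2*n), pow_succ _ n, pow_add _ (2*n) 2]
  set r := √(z + sin θ ^ 2) with hr
  have hW : (z + sin θ ^ 2)^n ≠ 0 := by positivity
  generalize (z + sin θ ^ 2)^n = W at *
  generalize (sin θ * cos θ)^(2*n) = Pn at *
  generalize sin θ * cos θ = p at *
  generalize sin θ ^ 2 = S at *
  have hr0 : r ≠ 0 := hs.ne'
  clear h2 h1
  clear_value r
  obtain rfl : S = r^2 - z := by linarith
  rw [show z + (r^2 - z) = r^2 by ring]
  push_cast
  field_simp
  linear_combination 2 * Pn * e2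

theorem ladder1 (n : ℕ) {z : ℝ} (hz : 0 < z) :
    2 * (z * (1 + z)) * qq1 (n+1) z + (-(n + 1/2) * (1 + 2 * z)) * qq (n+1) z + (n + 1/2) * qq n z = 0 := by
  refine comb_zero _ _ _ (fun θ => (1/2) * ((sin θ * cos θ)^(2*n+1) * (z - (1 + 2 * z) * sin θ ^ 2) / ((z + sin θ ^ 2)^(n+1) * √(z + sin θ ^ 2)))) _ _ _
    (cont_q1 (n+1) hz) (cont_q0 (n+1) hz) (cont_q0 n hz) ?_ (by simp) (by simp)
  intro θ
  have hv := wpos hz θ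
  have hs := sqrt_pos.2 hv
  have h1 : HasDerivAt (fun θ => z + sin θ ^ 2) (2 * (sin θ * cos θ)) θ :=
    (hasDerivAt_s2 θ).const_add z
  have h3 : HasDerivAt (fun θ => z - (1 + 2*z) * sin θ ^ 2) (-((1 + 2*z) * (2 * (sin θ * cos θ)))) θ :=
    ((hasDerivAt_s2 θ).const_mul (1+2*z)).const_sub z
  have h2 := ((((hasDerivAt_sc θ).pow (2*n+1)).mul h3).div ((h1.pow (n+1)).mul (h1.sqrt hv.ne')) (by simp only [Pi.mul_apply, Pi.pow_apply]; positivity)).const_mul (1/2)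
  refine h2.congr_deriv ?_
  simp only [Pi.mul_apply, Pi.pow_apply]
  have e := sq_sqrt hv.le
  have e2 : (sin θ * cos θ)^2 = sin θ ^ 2 * (1 - sin θ ^ 2) := by
    rw [mul_pow, cos_sq']
  rw [Nat.add_sub_cancel, Nat.add_sub_cancel, show 2 * (n+1) = 2*n + 2 by ring]
  simp only [pow_succ _ (2*n), pow_succ _ (n+1), pow_succ _ n, pow_add _ (2*n) 2]
  set r := √(z + sin θ ^ 2) with hr
  have hW : (z + sin θ ^ 2)^n ≠ 0 := by positivity
  generalize (z + sin θ ^ 2)^n = W at *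
  generalize (sin θ * cos θ)^(2*n) = Pn at *
  generalize sin θ * cos θ = p at *
  generalize sin θ ^ 2 = S at *
  have hr0 : r ≠ 0 := hs.ne'
  clear h2 h1
  clear_value r
  obtain rfl : S = r^2 - z := by linarith
  rw [show z + (r^2 - z) = r^2 by ring]
  push_cast
  field_simp
  linear_combination Pn*( -2*r^2*(1+2*z) - (z-(r^2-z)*(1+2*z))*(2*n+3) + 2*z*(2*n+3)*(1+z) + (2*n+1)*r^2*(1+2*z) ) * e2

theorem hasDerivAt_Dy {z : ℝ} (hz : 0 < z) :
    HasDerivAt (fun z => z * (1 + z) * y1 z) (-(1/4) * yy z) z := by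
  have h0 : HasDerivAt (fun z : ℝ => z * (1 + z)) (1 + 2 * z) z := by
    refine ((hasDerivAt_id z).mul ((hasDerivAt_id z).const_add 1)).congr_deriv ?_
    simp; ring
  refine (h0.mul (hasDerivAt_y1 hz)).congr_deriv ?_
  linear_combination y_ode hz

theorem hasDerivAt_Dq (n : ℕ) {z : ℝ} (hz : 0 < z) :
    HasDerivAt (fun z => z * (1 + z) * qq1 (n+1) z) ((n + 1/2) * (n + 3/2) * qq (n+1) z) z := by
  have h0 : HasDerivAt (fun z : ℝ => 1 + 2 * z) 2 z := by
    simpa using ((hasDerivAt_id z).const_mul 2).const_add 1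
  have h1 := ((h0.mul (hasDerivAt_qq (n+1) hz)).sub (hasDerivAt_qq n hz)).const_mul ((1/2) * (n + 1/2 : ℝ))
  have h2 : HasDerivAt (fun z => z * (1 + z) * qq1 (n+1) z) (1 / 2 * (n + 1 / 2 : ℝ) * (2 * qq (n + 1) z + (1 + 2 * z) * qq1 (n + 1) z - qq1 n z)) z := by
    refine h1.congr_of_eventuallyEq ?_
    filter_upwards [isOpen_Ioi.mem_nhds hz] with x hx
    simp only [Pi.sub_apply, Pi.mul_apply]
    linear_combination (1/2) * ladder1 n hx
  refine h2.congr_deriv ?_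
  have l1 := ladder1 n hz
  have l2 := ladder2 n hz
  have hz0 : z * (1 + z) ≠ 0 := by positivity
  apply mul_left_cancel₀ hz0
  linear_combination (n + 1/2 : ℝ) / 4 * (1+2*z) * l1 - (n+1/2 : ℝ)/4 * l2

noncomputable def Bf (n : ℕ) (z : ℝ) : ℝ :=
  (2 * (z * (1 + z) * y1 z)^2 - (1/2) * (z * (1 + z)) * (yy z)^2) * qq (n+1) z
  - 2 * yy z * (z * (1 + z) * y1 z) * (z * (1 + z) * qq1 (n+1) z)
  + ((n + 1/2) * (n + 3/2) + 1) * (z * (1+z)) * (yy z)^2 * qq (n+1) z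

theorem hasDerivAt_Bf (n : ℕ) {z : ℝ} (hz : 0 < z) :
    HasDerivAt (Bf n) ((1 / (4 * (n+1))) * ((n+3/2)^4 * (yy z ^ 2 * qq (n+2) z) - (n+1/2)^4 * (yy z ^2 * qq n z))) z := by
  have h0 : HasDerivAt (fun z : ℝ => z * (1 + z)) (1 + 2 * z) z := by
    refine ((hasDerivAt_id z).mul ((hasDerivAt_id z).const_add 1)).congr_deriv ?_
    simp; ring
  have hy := hasDerivAt_yy hz
  have hq := hasDerivAt_qq (n+1) hz
  have hDy := hasDerivAt_Dy hz
  have hDq := hasDerivAt_Dq n hz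
  have H := (((((hDy.pow 2).const_mul 2).sub ((h0.const_mul (1/2)).mul (hy.pow 2))).mul hq).sub
    (((hy.const_mul 2).mul hDy).mul hDq)).add (((h0.const_mul ((n + 1/2) * (n + 3/2) + 1 : ℝ)).mul (hy.pow 2)).mul hq)
  refine H.congr_deriv ?_
  simp only [Pi.sub_apply, Pi.mul_apply, Pi.pow_apply, Nat.cast_ofNat, Nat.reduceSub, pow_one]
  have l1 := ladder1 n hz
  have l2 := ladder2 (n+1) hz
  push_cast at l2
  have hn : (n : ℝ) + 1 ≠ 0 := by positivity
  rw [eq_comm, one_div_mul_eq_div, div_eq_iff (by positivity)]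
  linear_combination (yy z)^2 * (-(n+3/2 : ℝ)^3 * l2 - (n+1/2 : ℝ)^3 * l1)


theorem intble_sin : IntervalIntegrable (fun θ => sin θ ^ (-(3/4) : ℝ)) volume 0 (π/2) := by
  have h : IntervalIntegrable (fun θ : ℝ => (2/π)^(-(3/4) : ℝ) * θ ^ (-(3/4) : ℝ)) volume 0 (π/2) :=
    (intervalIntegrable_rpow' (by norm_num)).const_mul _
  refine h.mono_fun' ?_ ?_
  · exact (Measurable.pow_const measurable_sin _).aestronglyMeasurable
  · rw [uIoc_of_le (by positivity)]
    refine (ae_restrict_iff' measurableSet_Ioc).2 (Eventually.of_forall fun θ hθ => ?_)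
    have h1 : 2/π * θ ≤ sin θ := mul_le_sin hθ.1.le hθ.2
    have h2 : 0 < 2/π * θ := by have := hθ.1; positivity
    show ‖sin θ ^ (-(3/4) : ℝ)‖ ≤ (2/π)^(-(3/4) : ℝ) * θ ^ (-(3/4) : ℝ)
    rw [← mul_rpow (by positivity) hθ.1.le, norm_of_nonneg (rpow_nonneg (h2.le.trans h1) _)]
    exact rpow_le_rpow_of_nonpos h2 h1 (by norm_num)

noncomputable def C0 : ℝ := ∫ θ in (0:ℝ)..(π/2), sin θ ^ (-(3/4) : ℝ)

theorem intble_cos : IntervalIntegrable (fun θ => cos θ ^ (-(3/4) : ℝ)) volume 0 (π/2) := by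
  have := (intble_sin.comp_sub_left (π/2)).symm
  simpa [sin_pi_div_two_sub] using this

theorem C0_cos : C0 = ∫ θ in (0:ℝ)..(π/2), cos θ ^ (-(3/4) : ℝ) := by
  have := intervalIntegral.integral_comp_sub_left (a := 0) (b := π/2) (fun θ => sin θ ^ (-(3/4) : ℝ)) (π/2)
  simp only [sin_pi_div_two_sub, sub_self, sub_zero] at this
  rw [this, C0]

theorem C0_nonneg : 0 ≤ C0 := by
  refine intervalIntegral.integral_nonneg (by positivity) (fun θ hθ => ?_)
  exact rpow_nonneg (sin_nonneg_of_nonneg_of_le_pi hθ.1 (by linarith [hθ.2, pi_pos])) _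

/-- the basic pointwise bound -/
theorem kernel_bound {v a b s : ℝ} (ha : 0 < a) (hb : 0 < b) (hs : 0 < s) (h1 : a ≤ v) (h2 : b * s^2 ≤ v) :
    1 / √v ≤ a ^ (-(1/8) : ℝ) * b ^ (-(3/8) : ℝ) * s ^ (-(3/4) : ℝ) := by
  have hv : 0 < v := ha.trans_le h1
  have e1 : 1 / √v = v ^ (-(1/8) : ℝ) * v ^ (-(3/8) : ℝ) := by
    rw [← rpow_add hv, sqrt_eq_rpow, one_div, ← rpow_neg hv.le]; norm_num
  have e2 : b ^ (-(3/8) : ℝ) * s ^ (-(3/4) : ℝ) = (b * s^2) ^ (-(3/8) : ℝ) := by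
    rw [mul_rpow hb.le (by positivity), ← rpow_natCast s 2, ← rpow_mul hs.le]; norm_num
  rw [e1, mul_assoc, e2]
  have := rpow_le_rpow_of_nonpos ha h1 (z := -(1/8)) (by norm_num)
  have := rpow_le_rpow_of_nonpos (by positivity) h2 (z := -(3/8)) (by norm_num)
  gcongr

theorem sin_pos' {θ : ℝ} (hθ : θ ∈ Ioc 0 (π/2)) : 0 < sin θ :=
  sin_pos_of_pos_of_lt_pi hθ.1 (by linarith [hθ.2, pi_pos])

theorem int_bound_sin (f : ℝ → ℝ) (c : ℝ) (hf : Continuous f) 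
    (h : ∀ θ ∈ Ioc 0 (π/2), f θ ≤ c * sin θ ^ (-(3/4) : ℝ)) : ∫ θ in (0:ℝ)..(π/2), f θ ≤ c * C0 := by
  rw [C0, ← intervalIntegral.integral_const_mul]
  refine intervalIntegral.integral_mono_on_of_le_Ioo (by positivity) (hf.intervalIntegrable _ _) (intble_sin.const_mul _) ?_
  intro θ hθ
  exact h θ ⟨hθ.1, hθ.2.le⟩

theorem yy_le {z : ℝ} (hz : 0 < z) : yy z ≤ (1 + z) ^ (-(3/8) : ℝ) * C0 := by
  refine int_bound_sin _ _ (cont_y0 hz) (fun θ hθ => ?_)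
  have hs := sin_pos' hθ
  have h1 := sin_sq_le_one θ
  have := kernel_bound (v := 1 + z * sin θ ^ 2) (a := 1) (b := 1 + z) one_pos (by linarith) hs (by nlinarith [sq_nonneg (sin θ)]) (by nlinarith)
  simpa using this

theorem qq0_le {z : ℝ} (hz : 0 < z) : qq 0 z ≤ z ^ (-(1/8) : ℝ) * (1 + z) ^ (-(3/8) : ℝ) * C0 := by
  refine int_bound_sin _ _ (cont_q0 0 hz) (fun θ hθ => ?_)
  have hs := sin_pos' hθ
  have h1 := sin_sq_le_one θ
  have := kernel_bound (v := z + sin θ ^ 2) (a := z) (b := 1 + z) hz (by linarith) hs (by nlinarith [sq_nonneg (sin θ)]) (by nlinarith)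
  simpa using this

theorem yy_nonneg {z : ℝ} (hz : 0 < z) : 0 ≤ yy z :=
  intervalIntegral.integral_nonneg (by positivity) (fun θ _ => by have := vpos hz θ; positivity)

theorem pow2_nonneg (x : ℝ) (n : ℕ) : 0 ≤ x^(2*n) := by rw [pow_mul]; positivity

theorem qq_nonneg (n : ℕ) {z : ℝ} (hz : 0 < z) : 0 ≤ qq n z :=
  intervalIntegral.integral_nonneg (by positivity) (fun θ _ => by
    have := wpos hz θ; have := pow2_nonneg (sin θ * cos θ) n; positivity)

theorem yy_le_pi {z : ℝ} (hz : 0 < z) : yy z ≤ π/2 := by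
  have : yy z ≤ ∫ θ in (0:ℝ)..(π/2), (1:ℝ) := by
    refine intervalIntegral.integral_mono_on (by positivity) ((cont_y0 hz).intervalIntegrable _ _) (by simp) (fun θ _ => ?_)
    have : 1 ≤ √(1 + z * sin θ ^ 2) := by rw [one_le_sqrt]; nlinarith [sq_nonneg (sin θ)]
    exact (div_le_one (by linarith)).2 this
  simpa using this

theorem yy_ge {z : ℝ} (hz : 0 < z) : π/2 * (1 - z/2) ≤ yy z := by
  have : ∫ θ in (0:ℝ)..(π/2), (1 - z/2) ≤ yy z := by
    refine intervalIntegral.integral_mono_on (by positivity) (by simp) ((cont_y0 hz).intervalIntegrable _ _) (fun θ _ => ?_)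
    have hv := vpos hz θ
    have h1 := sin_sq_le_one θ
    have h0 := sq_nonneg (sin θ)
    have : √(1 + z * sin θ ^ 2) ≤ 1 + z/2 := by
      rw [sqrt_le_left (by linarith)]; nlinarith
    rw [le_div_iff₀ (sqrt_pos.2 hv)]
    by_cases hh : 1 - z/2 ≤ 0
    · nlinarith [sqrt_nonneg (1 + z * sin θ ^ 2)]
    · nlinarith
  rwa [intervalIntegral.integral_const, smul_eq_mul, sub_zero] at this

theorem yysq_ge {z : ℝ} (hz : 0 < z) : (π/2)^2 * (1 - z) ≤ yy z ^ 2 := by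
  have h := yy_ge hz
  by_cases hh : z ≤ 1
  · have : 0 ≤ π/2 * (1 - z/2) := mul_nonneg (by positivity) (by linarith)
    calc _ ≤ (π/2 * (1 - z/2))^2 := by nlinarith [sq_nonneg (π/2), sq_nonneg (π/2*z)]
      _ ≤ _ := by gcongr
  · have : (π/2)^2 * (1 - z) ≤ 0 := mul_nonpos_of_nonneg_of_nonpos (by positivity) (by linarith)
    nlinarith [sq_nonneg (yy z)]

theorem qq_succ_le (n : ℕ) {z : ℝ} (hz : 0 < z) : qq (n+1) z ≤ qq n z ∧ qq (n+1) z ≤ (1/z) * qq n z := by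
  have key : ∀ θ, ∀ c : ℝ, (sin θ * cos θ)^2 / (z + sin θ ^2) ≤ c → (sin θ * cos θ) ^ (2*(n+1)) / ((z + sin θ ^ 2)^(n+1) * √(z + sin θ ^ 2)) ≤ c * ((sin θ * cos θ) ^ (2*n) / ((z + sin θ ^ 2)^n * √(z + sin θ ^ 2))) := by
    intro θ c hc
    have hw := wpos hz θ
    have := pow2_nonneg (sin θ * cos θ) n
    calc _ = (sin θ * cos θ)^2 / (z + sin θ ^2) * ((sin θ * cos θ) ^ (2*n) / ((z + sin θ ^ 2)^n * √(z + sin θ ^ 2))) := by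
          rw [show 2*(n+1) = 2*n+2 by ring, pow_add _ (2*n) 2, pow_succ _ n]
          field_simp
      _ ≤ _ := by gcongr
  have aux : ∀ c : ℝ, (∀ θ, (sin θ * cos θ)^2 / (z + sin θ ^2) ≤ c) → qq (n+1) z ≤ c * qq n z := by
    intro c hc
    unfold qq
    rw [← intervalIntegral.integral_const_mul]
    exact intervalIntegral.integral_mono_on (by positivity) ((cont_q0 _ hz).intervalIntegrable _ _)
      (((cont_q0 _ hz).const_mul c).intervalIntegrable _ _) (fun θ _ => key θ c (hc θ))
  have hp : ∀ θ : ℝ, (sin θ * cos θ)^2 ≤ sin θ^2 ∧ (sin θ * cos θ)^2 ≤ 1 := fun θ => by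
    rw [mul_pow]
    constructor <;> nlinarith [sin_sq_le_one θ, cos_sq_le_one θ, sq_nonneg (sin θ), sq_nonneg (cos θ)]
  constructor
  · have := aux 1 (fun θ => by
      rw [div_le_one (wpos hz θ)]; linarith [(hp θ).1])
    simpa using this
  · refine aux _ (fun θ => ?_)
    exact div_le_div₀ zero_le_one (hp θ).2 hz (by linarith [sq_nonneg (sin θ)])

theorem qq_le_qq0 (n : ℕ) {z : ℝ} (hz : 0 < z) : qq n z ≤ qq 0 z := by
  induction n with
  | zero => rfl
  | succ n ih => exact (qq_succ_le n hz).1.trans ih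

theorem y1_abs {z : ℝ} (hz : 0 < z) : |z * (1 + z) * y1 z| ≤ z * yy z := by
  have h : |y1 z| ≤ 1/(1+z) * yy z := by
    unfold y1 yy
    rw [← intervalIntegral.integral_const_mul]
    rw [← Real.norm_eq_abs]
    refine intervalIntegral.norm_integral_le_of_norm_le (by positivity) ?_ (((cont_y0 hz).const_mul _).intervalIntegrable _ _)
    refine Eventually.of_forall (fun θ _ => ?_)
    have hv := vpos hz θ
    have h1 := sin_sq_le_one θ
    rw [norm_eq_abs, abs_div, abs_neg, abs_of_nonneg (sq_nonneg (sin θ)), abs_of_pos (by positivity), div_le_iff₀ (by positivity)]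
    have hs := sqrt_pos.2 hv
    field_simp
    nlinarith
  rw [abs_mul, abs_of_pos (by positivity)]
  calc _ ≤ z * (1+z) * (1/(1+z) * yy z) := by gcongr
    _ = _ := by field_simp

theorem qq1_abs (n : ℕ) {z : ℝ} (hz : 0 < z) : |z * (1 + z) * qq1 n z| ≤ (n+1/2) * ((1+z) * qq n z) := by
  have h : |qq1 n z| ≤ (n+1/2)/z * qq n z := by
    unfold qq1 qq
    rw [← intervalIntegral.integral_const_mul]
    rw [← Real.norm_eq_abs]
    refine intervalIntegral.norm_integral_le_of_norm_le (by positivity) ?_ (((cont_q0 n hz).const_mul _).intervalIntegrable _ _)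
    refine Eventually.of_forall (fun θ _ => ?_)
    have hv := wpos hz θ
    have hp := pow2_nonneg (sin θ * cos θ) n
    rw [neg_mul, norm_eq_abs, abs_div, abs_neg, abs_of_nonneg (by positivity), abs_of_pos (by positivity), pow_succ _ n]
    have : (n+1/2 : ℝ) / (z + sin θ ^2) ≤ (n+1/2)/z := by gcongr; linarith [sq_nonneg (sin θ)]
    calc _ = (n+1/2 : ℝ) / (z + sin θ ^2) * ((sin θ * cos θ) ^ (2*n) / ((z + sin θ ^ 2)^n * √(z + sin θ ^ 2))) := by field_simp
      _ ≤ _ := by gcongr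
  rw [abs_mul, abs_of_pos (by positivity)]
  calc _ ≤ z * (1+z) * ((n+1/2)/z * qq n z) := by gcongr
    _ = _ := by field_simp

theorem Bf_abs (n : ℕ) {z : ℝ} (hz : 0 < z) : |Bf n z| ≤ (2 + 1/2 + 2 * (n + 3/2) + ((n + 1/2) * (n + 3/2) + 1)) * (z * (1+z) * yy z ^ 2 * qq (n+1) z) := by
  have hy := yy_nonneg hz
  have hq := qq_nonneg (n+1) hz
  have a1 := y1_abs hz
  have a2 := qq1_abs (n+1) hz
  push_cast at a2
  unfold Bf
  set A := z * (1 + z) * y1 z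
  set Q := z * (1 + z) * qq1 (n+1) z
  set y := yy z
  set q := qq (n+1) z
  have t1 : A^2 ≤ z * (1+z) * y^2 := by
    rw [← sq_abs]
    calc _ ≤ (z*y)^2 := by gcongr
      _ ≤ _ := by nlinarith [mul_nonneg hz.le (sq_nonneg y)]
  have t2 : |2 * y * A * Q| ≤ 2 * (n+3/2) * (z * (1+z) * y^2 * q) := by
    rw [abs_mul, abs_mul, abs_of_nonneg (by positivity : 0 ≤ 2 * y)]
    calc _ ≤ 2 * y * (z * y) * ((n+1+1/2) * ((1+z) * q)) := by gcongr
      _ = _ := by ring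
  have t3 : |(2 * A^2 - 1/2 * (z * (1+z)) * y^2) * q| ≤ (2 + 1/2) * (z * (1+z) * y^2 * q) := by
    rw [abs_mul, abs_of_nonneg hq]
    have : |2 * A^2 - 1/2 * (z * (1+z)) * y^2| ≤ (2+1/2) * (z * (1+z) * y^2) := by
      have : 0 ≤ z * (1+z) * y^2 := by positivity
      rw [abs_le]; constructor <;> nlinarith [sq_nonneg A]
    calc _ ≤ (2+1/2) * (z * (1+z) * y^2) * q := by gcongr
      _ = _ := by ring
  have t4 : |((n + 1/2 : ℝ) * (n + 3/2) + 1) * (z * (1+z)) * y^2 * q| = ((n + 1/2 : ℝ) * (n + 3/2) + 1) * (z * (1+z) * y^2 * q) := by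
    rw [abs_of_nonneg (by positivity)]; ring
  have := abs_add_le ((2 * A^2 - 1/2 * (z * (1+z)) * y^2) * q - 2 * y * A * Q) (((n + 1/2 : ℝ) * (n + 3/2) + 1) * (z * (1+z)) * y^2 * q)
  have := abs_sub ((2 * A^2 - 1/2 * (z * (1+z)) * y^2) * q) (2 * y * A * Q)
  linarith


theorem contOn_yy : ContinuousOn yy (Ioi 0) := fun z hz => (hasDerivAt_yy hz).continuousAt.continuousWithinAt
theorem contOn_qq (n : ℕ) : ContinuousOn (qq n) (Ioi 0) := fun z hz => (hasDerivAt_qq n hz).continuousAt.continuousWithinAt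

theorem intOn_dom : IntegrableOn (fun z : ℝ => z ^ (-(1/8) : ℝ) * (1+z) ^ (-(9/8) : ℝ)) (Ioi 0) := by
  have hm : Measurable (fun z : ℝ => z ^ (-(1/8) : ℝ) * (1+z) ^ (-(9/8) : ℝ)) := by fun_prop
  rw [← Ioc_union_Ioi_eq_Ioi (zero_le_one' ℝ)]
  refine IntegrableOn.union ?_ ?_
  · have h : IntegrableOn (fun z : ℝ => z ^ (-(1/8) : ℝ)) (Ioc 0 1) :=
      (intervalIntegrable_iff_integrableOn_Ioc_of_le zero_le_one).1 (intervalIntegrable_rpow' (by norm_num))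
    refine h.mono' hm.aestronglyMeasurable ?_
    refine (ae_restrict_iff' measurableSet_Ioc).2 (Eventually.of_forall fun z hz => ?_)
    have h0 : 0 < z := hz.1
    rw [norm_of_nonneg (by positivity)]
    have : (1+z) ^ (-(9/8) : ℝ) ≤ 1 := rpow_le_one_of_one_le_of_nonpos (by linarith) (by norm_num)
    have h2 : 0 ≤ z ^ (-(1/8) : ℝ) := by positivity
    nlinarith
  · have h : IntegrableOn (fun z : ℝ => z ^ (-(9/8) : ℝ)) (Ioi 1) := integrableOn_Ioi_rpow_of_lt (by norm_num) one_pos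
    refine h.mono' hm.aestronglyMeasurable ?_
    refine (ae_restrict_iff' measurableSet_Ioi).2 (Eventually.of_forall fun z hz => ?_)
    have h0 : 1 < z := hz
    have h00 : 0 < z := by linarith
    rw [norm_of_nonneg (by positivity)]
    have h1 : (1+z) ^ (-(9/8) : ℝ) ≤ z ^ (-(9/8) : ℝ) := rpow_le_rpow_of_nonpos h00 (by linarith) (by norm_num)
    have h3 : z ^ (-(1/8) : ℝ) ≤ 1 := rpow_le_one_of_one_le_of_nonpos h0.le (by norm_num)
    have h2 : 0 ≤ z ^ (-(1/8) : ℝ) := by positivity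
    have h4 : 0 ≤ (1+z) ^ (-(9/8) : ℝ) := by positivity
    nlinarith

theorem rpow_comb {z : ℝ} (hz : 0 < z) : ((1 + z) ^ (-(3/8) : ℝ))^2 * (1 + z) ^ (-(3/8) : ℝ) = (1+z) ^ (-(9/8) : ℝ) := by
  have : 0 < 1 + z := by linarith
  rw [← rpow_natCast, ← rpow_mul this.le, ← rpow_add this]; norm_num

theorem yyqq_le (n : ℕ) {z : ℝ} (hz : 0 < z) : yy z ^ 2 * qq n z ≤ C0^3 * (z ^ (-(1/8) : ℝ) * (1+z) ^ (-(9/8) : ℝ)) := by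
  have h1 := yy_le hz
  have h2 := (qq_le_qq0 n hz).trans (qq0_le hz)
  have h3 := yy_nonneg hz
  have h4 := qq_nonneg n hz
  calc _ ≤ ((1 + z) ^ (-(3/8) : ℝ) * C0)^2 * (z ^ (-(1/8) : ℝ) * (1 + z) ^ (-(3/8) : ℝ) * C0) := by gcongr
    _ = C0^3 * (z ^ (-(1/8) : ℝ) * (((1 + z) ^ (-(3/8) : ℝ))^2 * (1 + z) ^ (-(3/8) : ℝ))) := by ring
    _ = _ := by rw [rpow_comb hz]

theorem intOn_yyqq (n : ℕ) : IntegrableOn (fun z => yy z ^ 2 * qq n z) (Ioi 0) := by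
  refine (intOn_dom.const_mul (C0^3)).mono' ?_ ?_
  · exact ((contOn_yy.pow 2).mul (contOn_qq n)).aestronglyMeasurable measurableSet_Ioi
  · refine (ae_restrict_iff' measurableSet_Ioi).2 (Eventually.of_forall fun z hz => ?_)
    have h4 := qq_nonneg n hz
    rw [norm_of_nonneg (by positivity)]
    exact yyqq_le n hz

noncomputable def JJ (n : ℕ) : ℝ := ∫ z in Ioi (0:ℝ), yy z ^ 2 * qq n z

theorem Bf_bounds (n : ℕ) : ∃ M : ℝ, ∀ z : ℝ, 0 < z → |Bf n z| ≤ M * z ^ (7/8 : ℝ) ∧ |Bf n z| ≤ M * z ^ (-(1/8) : ℝ) := by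
  refine ⟨(2 + 1/2 + 2 * (n + 3/2) + ((n + 1/2) * (n + 3/2) + 1)) * C0^3, fun z hz => ?_⟩
  have h := Bf_abs n hz
  set M := (2 + 1/2 + 2 * (n + 3/2) + ((n + 1/2) * (n + 3/2) + 1) : ℝ)
  have hM : 0 ≤ M := by positivity
  have hC := C0_nonneg
  have h5 : 0 < 1 + z := by linarith
  have h6 : (1+z) * (1+z) ^ (-(9/8) : ℝ) ≤ 1 := by
    rw [← rpow_one_add' h5.le (by norm_num)]
    exact rpow_le_one_of_one_le_of_nonpos (by linarith) (by norm_num)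
  have h7 : 0 ≤ (1+z) * (1+z) ^ (-(9/8) : ℝ) := by positivity
  have e1 : z ^ (7/8 : ℝ) = z * z ^ (-(1/8) : ℝ) := by
    rw [← rpow_one_add' hz.le (by norm_num)]; norm_num
  have hzz : 0 ≤ z ^ (-(1/8) : ℝ) := by positivity
  constructor
  · calc _ ≤ M * (z * (1+z) * (yy z ^ 2 * qq (n+1) z)) := by rw [← mul_assoc (z * (1+z))]; exact h
      _ ≤ M * (z * (1+z) * (C0^3 * (z ^ (-(1/8) : ℝ) * (1+z) ^ (-(9/8) : ℝ)))) := mul_le_mul_of_nonneg_left (mul_le_mul_of_nonneg_left (yyqq_le _ hz) (by positivity)) hM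
      _ = M * C0^3 * (z * z ^ (-(1/8) : ℝ)) * ((1+z) * (1+z) ^ (-(9/8) : ℝ)) := by ring
      _ ≤ M * C0^3 * (z * z ^ (-(1/8) : ℝ)) * 1 := by gcongr
      _ = _ := by rw [e1, mul_one]
  · calc _ ≤ M * (z * (1+z) * (yy z ^ 2 * qq (n+1) z)) := by rw [← mul_assoc (z * (1+z))]; exact h
      _ ≤ M * (z * (1+z) * (yy z ^ 2 * (1/z * qq n z))) := by gcongr; exact (qq_succ_le n hz).2
      _ = M * ((1+z) * (yy z ^ 2 * qq n z)) := by field_simp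
      _ ≤ M * ((1+z) * (C0^3 * (z ^ (-(1/8) : ℝ) * (1+z) ^ (-(9/8) : ℝ)))) := mul_le_mul_of_nonneg_left (mul_le_mul_of_nonneg_left (yyqq_le _ hz) (by positivity)) hM
      _ = M * C0^3 * (z ^ (-(1/8) : ℝ)) * ((1+z) * (1+z) ^ (-(9/8) : ℝ)) := by ring
      _ ≤ M * C0^3 * (z ^ (-(1/8) : ℝ)) * 1 := by gcongr
      _ = _ := by rw [mul_one]

theorem JJ_rec (n : ℕ) : (n+3/2 : ℝ)^4 * JJ (n+2) = (n+1/2 : ℝ)^4 * JJ n := by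
  obtain ⟨M, hM⟩ := Bf_bounds n
  have hB0 : Bf n 0 = 0 := by simp [Bf]
  have hc : ContinuousWithinAt (Bf n) (Ici 0) 0 := by
    rw [ContinuousWithinAt, hB0]
    have ht : Tendsto (fun z : ℝ => M * z ^ (7/8 : ℝ)) (𝓝[Ici 0] 0) (𝓝 0) := by
      have : Continuous (fun z : ℝ => M * z ^ (7/8 : ℝ)) := by
        exact continuous_const.mul (continuous_id.rpow_const (fun _ => Or.inr (by norm_num)))
      have h := this.tendsto 0
      rw [zero_rpow (by norm_num), mul_zero] at h
      exact h.mono_left nhdsWithin_le_nhds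
    refine squeeze_zero_norm' ?_ ht
    filter_upwards [self_mem_nhdsWithin] with z hz
    rcases (show (0:ℝ) ≤ z from hz).eq_or_lt with h | h
    · rw [← h, hB0, zero_rpow (by norm_num)]; simp
    · exact (hM z h).1
  have hinf : Tendsto (Bf n) atTop (𝓝 0) := by
    have ht : Tendsto (fun z : ℝ => M * z ^ (-(1/8) : ℝ)) atTop (𝓝 0) := by
      simpa using (tendsto_rpow_neg_atTop (y := 1/8) (by norm_num)).const_mul M
    refine squeeze_zero_norm' ?_ ht
    filter_upwards [eventually_gt_atTop 0] with z hz
    exact (hM z hz).2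
  have i1 := (intOn_yyqq (n+2)).const_mul ((n+3/2 : ℝ)^4)
  have i2 := (intOn_yyqq n).const_mul ((n+1/2 : ℝ)^4)
  have H := integral_Ioi_of_hasDerivAt_of_tendsto hc (fun z hz => hasDerivAt_Bf n hz)
    ((i1.sub i2).const_mul (1 / (4 * (n+1) : ℝ))) hinf
  rw [hB0, sub_zero, MeasureTheory.integral_const_mul] at H
  have hn : (1 / (4 * (n+1) : ℝ)) ≠ 0 := by positivity
  have H2 := (mul_eq_zero.1 H).resolve_left hn
  rw [MeasureTheory.integral_sub i1 i2, MeasureTheory.integral_const_mul, MeasureTheory.integral_const_mul] at H2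
  exact sub_eq_zero.1 H2


noncomputable def FF (n : ℕ) (z θ : ℝ) : ℝ := (sin θ * cos θ) ^ (2*n) / ((z + sin θ ^ 2)^n * √(z + sin θ ^ 2))

theorem FF_nonneg (n : ℕ) {z : ℝ} (hz : 0 < z) (θ : ℝ) : 0 ≤ FF n z θ := by
  have := wpos hz θ; have := pow2_nonneg (sin θ * cos θ) n; unfold FF; positivity

theorem FF_int (m : ℕ) {θ : ℝ} (hs : 0 < sin θ) :
    IntegrableOn (fun z => FF (m+1) z θ) (Ioi 0) ∧
    ∫ z in Ioi (0:ℝ), FF (m+1) z θ = sin θ * cos θ ^ (2*m+2) / (m+1/2) := by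
  set G : ℝ → ℝ := fun z => -(1/(m+1/2:ℝ)) * ((sin θ * cos θ) ^ (2*(m+1)) * ((z + sin θ ^ 2)^m * √(z + sin θ ^ 2))⁻¹) with hG
  have hd : ∀ z ∈ Ici (0:ℝ), HasDerivAt G (FF (m+1) z θ) z := by
    intro z hz
    have hz0 : (0:ℝ) ≤ z := hz
    have hw : 0 < z + sin θ ^ 2 := by positivity
    have h1 : HasDerivAt (fun z => z + sin θ ^ 2) 1 z := (hasDerivAt_id z).add_const _
    have h2 := h1.sqrt hw.ne'
    have h3 := h1.pow m
    have hne : (z + sin θ ^ 2)^m * √(z + sin θ ^ 2) ≠ 0 := by positivity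
    have h4 := (((h3.mul h2).inv hne).const_mul ((sin θ * cos θ) ^ (2*(m+1)))).const_mul (-(1/(m+1/2:ℝ)))
    refine h4.congr_deriv ?_
    unfold FF
    set w := z + sin θ ^ 2
    have hsq : √w ^ 2 = w := sq_sqrt hw.le
    have hsp : 0 < √w := sqrt_pos.2 hw
    set r := √w
    have hp : (m:ℝ) * w^(m-1) * w = m * w^m := by
      rcases m with _ | m
      · simp
      · simp [pow_succ]; ring
    have hp2 : (m:ℝ) * w^(m-1) = m * w^m / w := by rw [← hp]; field_simp
    change -(1/(m+1/2:ℝ)) * ((sin θ * cos θ) ^ (2*(m+1)) * (-(m * w^(m-1) * 1 * r + w^m * (1/(2*r))) / (w^m * r)^2)) = (sin θ * cos θ) ^ (2*(m+1)) / (w^(m+1) * r)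
    rw [mul_one, hp2, pow_succ w m]
    have hP : 0 < w^m := by positivity
    generalize w^m = P at hP
    generalize (sin θ * cos θ) ^ (2*(m+1)) = X
    clear_value w r
    subst hsq
    field_simp
  have hn : ∀ z ∈ Ioi (0:ℝ), 0 ≤ FF (m+1) z θ := fun z hz => FF_nonneg _ hz θ
  have hl : Tendsto G atTop (𝓝 0) := by
    have : Tendsto (fun z => ((z + sin θ ^ 2)^m * √(z + sin θ ^ 2))⁻¹) atTop (𝓝 0) := by
      have t1 : Tendsto (fun z => (√(z + sin θ ^ 2))⁻¹) atTop (𝓝 0) :=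
        tendsto_inv_atTop_zero.comp (tendsto_sqrt_atTop.comp (tendsto_atTop_add_const_right _ _ tendsto_id))
      refine squeeze_zero' ?_ ?_ t1
      · filter_upwards [eventually_gt_atTop 0] with z hz
        positivity
      · filter_upwards [eventually_gt_atTop 1] with z hz
        have h1 : 1 ≤ (z + sin θ ^ 2)^m := one_le_pow₀ (by nlinarith [sq_nonneg (sin θ)])
        have h2 : 0 < √(z + sin θ ^ 2) := sqrt_pos.2 (by positivity)
        exact inv_anti₀ h2 (by nlinarith)
    have := (this.const_mul ((sin θ * cos θ) ^ (2*(m+1)))).const_mul (-(1/(m+1/2:ℝ)))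
    rw [mul_zero, mul_zero] at this
    exact this
  refine ⟨integrableOn_Ioi_deriv_of_nonneg' hd hn hl, ?_⟩
  rw [integral_Ioi_of_hasDerivAt_of_nonneg' hd hn hl]
  simp only [hG, zero_add, sqrt_sq hs.le]
  field_simp
  ring

theorem Fub (m : ℕ) (g : ℝ → ℝ) (hg : Continuous g) (hg0 : ∀ θ, 0 ≤ g θ) :
    IntegrableOn (fun z => ∫ θ in (0:ℝ)..(π/2), g θ * FF (m+1) z θ) (Ioi 0) ∧
    ∫ z in Ioi (0:ℝ), ∫ θ in (0:ℝ)..(π/2), g θ * FF (m+1) z θ = ∫ θ in (0:ℝ)..(π/2), g θ * (sin θ * cos θ ^ (2*m+2) / (m+1/2)) := by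
  have hpi : (0:ℝ) ≤ π/2 := by positivity
  simp only [intervalIntegral.integral_of_le hpi]
  have hmeas : Measurable (fun p : ℝ × ℝ => g p.2 * FF (m+1) p.1 p.2) := by
    unfold FF
    have := hg.measurable
    fun_prop
  have hint : Integrable (fun p : ℝ × ℝ => g p.2 * FF (m+1) p.1 p.2) ((volume.restrict (Ioi (0:ℝ))).prod (volume.restrict (Ioc (0:ℝ) (π/2)))) := by
    rw [integrable_prod_iff' hmeas.aestronglyMeasurable]
    constructor
    · refine (ae_restrict_iff' measurableSet_Ioc).2 (Eventually.of_forall fun θ hθ => ?_)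
      exact (FF_int m (sin_pos' hθ)).1.const_mul (g θ)
    · have : IntegrableOn (fun θ => g θ * (sin θ * cos θ ^ (2*m+2) / (m+1/2:ℝ))) (Ioc (0:ℝ) (π/2)) := by
        have hc : Continuous (fun θ => g θ * (sin θ * cos θ ^ (2*m+2) / (m+1/2:ℝ))) := by fun_prop
        exact (intervalIntegrable_iff_integrableOn_Ioc_of_le hpi).1 (hc.intervalIntegrable _ _)
      refine this.congr ?_
      refine (ae_restrict_iff' measurableSet_Ioc).2 (Eventually.of_forall fun θ hθ => ?_)
      beta_reduce
      rw [← (FF_int m (sin_pos' hθ)).2, ← MeasureTheory.integral_const_mul]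
      refine setIntegral_congr_fun measurableSet_Ioi (fun z hz => ?_)
      exact (norm_of_nonneg (mul_nonneg (hg0 θ) (FF_nonneg _ hz θ))).symm
  refine ⟨hint.integral_prod_left, ?_⟩
  rw [MeasureTheory.integral_integral_swap hint]
  refine setIntegral_congr_fun measurableSet_Ioc (fun θ hθ => ?_)
  rw [MeasureTheory.integral_const_mul, (FF_int m (sin_pos' hθ)).2]

theorem int_sc (k : ℕ) : ∫ θ in (0:ℝ)..(π/2), sin θ * cos θ ^ k = 1/(k+1) := by
  have h : ∀ θ ∈ uIcc (0:ℝ) (π/2), HasDerivAt (fun θ => -(cos θ ^ (k+1)) / (k+1:ℝ)) (sin θ * cos θ ^ k) θ := by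
    intro θ _
    have := (((hasDerivAt_cos θ).pow (k+1)).neg).div_const (k+1:ℝ)
    refine this.congr_deriv ?_
    push_cast
    field_simp
  rw [intervalIntegral.integral_eq_sub_of_hasDerivAt h ((by fun_prop : Continuous (fun θ => sin θ * cos θ ^ k)).intervalIntegrable _ _)]
  simp
  ring

theorem qq_eq_FF (n : ℕ) (z : ℝ) : qq n z = ∫ θ in (0:ℝ)..(π/2), FF n z θ := rfl

theorem qq_integral (m : ℕ) : IntegrableOn (qq (m+1)) (Ioi 0) ∧ ∫ z in Ioi (0:ℝ), qq (m+1) z = 1/((m+1/2)*(2*m+3)) := by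
  have h := Fub m (fun _ => 1) continuous_const (fun _ => zero_le_one)
  simp only [one_mul, ← qq_eq_FF] at h
  refine ⟨h.1, h.2.trans ?_⟩
  rw [intervalIntegral.integral_div, int_sc]
  push_cast
  field_simp
  ring

theorem zqq_integral (m : ℕ) : IntegrableOn (fun z => z * qq (m+2) z) (Ioi 0) ∧
    ∫ z in Ioi (0:ℝ), z * qq (m+2) z ≤ (1/(m+1/2))*(1/(2*m+5) - 1/(2*m+7)) := by
  have h := Fub m (fun θ => sin θ ^ 2 * cos θ ^ 2) (by fun_prop) (fun _ => by positivity)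
  have hp : ∀ z ∈ Ioi (0:ℝ), z * qq (m+2) z ≤ ∫ θ in (0:ℝ)..(π/2), (sin θ ^ 2 * cos θ ^ 2) * FF (m+1) z θ := by
    intro z hz
    have hz0 : 0 < z := hz
    rw [qq_eq_FF, ← intervalIntegral.integral_const_mul]
    refine intervalIntegral.integral_mono_on (by positivity) ?_ ?_ ?_
    · exact ((cont_q0 (m+2) hz).const_mul z).intervalIntegrable _ _
    · exact ((by fun_prop : Continuous (fun θ => sin θ ^ 2 * cos θ ^ 2)).mul (cont_q0 (m+1) hz)).intervalIntegrable _ _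
    · intro θ _
      have hw := wpos hz θ
      have hr : 0 < √(z + sin θ ^ 2) := sqrt_pos.2 hw
      have e : z * FF (m+2) z θ = (z / (z + sin θ ^ 2)) * ((sin θ ^ 2 * cos θ ^ 2) * FF (m+1) z θ) := by
        unfold FF; field_simp; ring
      rw [e]
      have h1 : z / (z + sin θ ^ 2) ≤ 1 := (div_le_one hw).2 (by nlinarith [sq_nonneg (sin θ)])
      have h2 : 0 ≤ (sin θ ^ 2 * cos θ ^ 2) * FF (m+1) z θ := mul_nonneg (by positivity) (FF_nonneg _ hz θ)
      nlinarith
  have hi : IntegrableOn (fun z => z * qq (m+2) z) (Ioi 0) := by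
    refine h.1.mono' ((continuousOn_id.mul (contOn_qq (m+2))).aestronglyMeasurable measurableSet_Ioi) ?_
    refine (ae_restrict_iff' measurableSet_Ioi).2 (Eventually.of_forall fun z hz => ?_)
    rw [norm_of_nonneg (mul_nonneg (le_of_lt hz) (qq_nonneg _ hz))]
    exact hp z hz
  refine ⟨hi, (setIntegral_mono_on hi h.1 measurableSet_Ioi hp).trans (le_of_eq (h.2.trans ?_))⟩
  have e : ∀ θ : ℝ, sin θ ^ 2 * cos θ ^ 2 * (sin θ * cos θ ^ (2*m+2) / (m+1/2:ℝ)) = (1/(m+1/2:ℝ)) * (sin θ * cos θ ^ (2*m+4) - sin θ * cos θ ^ (2*m+6)) := by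
    intro θ
    rw [sin_sq]; field_simp; ring
  simp only [e]
  rw [intervalIntegral.integral_const_mul, intervalIntegral.integral_sub, int_sc, int_sc]
  · push_cast; norm_num [add_assoc]
  · exact (by fun_prop : Continuous _).intervalIntegrable _ _
  · exact (by fun_prop : Continuous _).intervalIntegrable _ _

theorem JJ_upper (m : ℕ) : JJ (m+2) ≤ (π/2)^2 * (1/((m+3/2)*(2*m+5))) := by
  have h := qq_integral (m+1)
  have e : (1/((m+3/2)*(2*m+5)) : ℝ) = ∫ z in Ioi (0:ℝ), qq (m+2) z := by
    rw [h.2]; push_cast; ring_nf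
  rw [e, ← MeasureTheory.integral_const_mul]
  refine setIntegral_mono_on (intOn_yyqq _) (h.1.const_mul _) measurableSet_Ioi (fun z hz => ?_)
  have h1 := yy_nonneg hz
  have h2 := yy_le_pi hz
  have h3 := qq_nonneg (m+2) hz
  gcongr

theorem JJ_lower (m : ℕ) : (π/2)^2 * (1/((m+3/2)*(2*m+5)) - (1/(m+1/2))*(1/(2*m+5) - 1/(2*m+7))) ≤ JJ (m+2) := by
  have h := qq_integral (m+1)
  have e : (1/((m+3/2)*(2*m+5)) : ℝ) = ∫ z in Ioi (0:ℝ), qq (m+2) z := by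
    rw [h.2]; push_cast; ring_nf
  have hz := zqq_integral m
  have : (π/2)^2 * ((∫ z in Ioi (0:ℝ), qq (m+2) z) - ∫ z in Ioi (0:ℝ), z * qq (m+2) z) ≤ JJ (m+2) := by
    rw [← MeasureTheory.integral_sub h.1 hz.1, ← MeasureTheory.integral_const_mul]
    refine setIntegral_mono_on ((h.1.sub hz.1).const_mul _) (intOn_yyqq _) measurableSet_Ioi (fun z hz => ?_)
    have h2 := yysq_ge hz
    have h3 := qq_nonneg (m+2) hz
    nlinarith
  refine le_trans ?_ this
  rw [e]
  have := hz.2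
  gcongr

theorem JJ_asym : Tendsto (fun k : ℕ => (k:ℝ)^2 * JJ (2*k+2)) atTop (𝓝 (π^2/32)) := by
  have hi : Tendsto (fun k : ℕ => ((k:ℝ))⁻¹) atTop (𝓝 0) := tendsto_inv_atTop_nhds_zero_nat
  have c : ∀ a b : ℝ, Tendsto (fun k : ℕ => a + b * ((k:ℝ))⁻¹) atTop (𝓝 a) := by
    intro a b
    simpa using tendsto_const_nhds.add (hi.const_mul b)
  have hu : Tendsto (fun k : ℕ => (π/2)^2 * (1/((2 + 3/2 * ((k:ℝ))⁻¹)*(4+5*((k:ℝ))⁻¹)))) atTop (𝓝 (π^2/32)) := by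
    have := (((c 2 (3/2)).mul (c 4 5)).inv₀ (by norm_num)).const_mul ((π/2)^2)
    simp only [one_div]
    convert this using 2
    ring
  have hl : Tendsto (fun k : ℕ => (π/2)^2 * (1/((2 + 3/2 * ((k:ℝ))⁻¹)*(4+5*((k:ℝ))⁻¹)))
      - (π/2)^2 * (2 * ((k:ℝ))⁻¹ * (((2 + 1/2 * ((k:ℝ))⁻¹)*(4+5*((k:ℝ))⁻¹)) * (4 + 7*((k:ℝ))⁻¹))⁻¹)) atTop (𝓝 (π^2/32)) := by
    have h2 := (((c 2 (1/2)).mul (c 4 5)).mul (c 4 7)).inv₀ (by norm_num)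
    have := hu.sub ((((hi.const_mul 2).mul h2)).const_mul ((π/2)^2))
    simpa using this
  refine tendsto_of_tendsto_of_tendsto_of_le_of_le' hl hu ?_ ?_
  · filter_upwards [eventually_gt_atTop 0] with k hk
    have hk : (0:ℝ) < k := by exact_mod_cast hk
    have := mul_le_mul_of_nonneg_left (JJ_lower (2*k)) (by positivity : (0:ℝ) ≤ (k:ℝ)^2)
    refine le_trans (le_of_eq ?_) this
    push_cast
    field_simp
    ring
  · filter_upwards [eventually_gt_atTop 0] with k hk
    have hk : (0:ℝ) < k := by exact_mod_cast hk
    have := mul_le_mul_of_nonneg_left (JJ_upper (2*k)) (by positivity : (0:ℝ) ≤ (k:ℝ)^2)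
    refine le_trans this (le_of_eq ?_)
    push_cast
    field_simp
    ring

theorem JJ_prod (n : ℕ) : JJ 0 = (∏ j ∈ Finset.range (n+1), ((3/4 + j : ℝ) / (1/4 + j)))^4 * JJ (2*n+2) := by
  have step : ∀ n : ℕ, JJ (2*n) = ((3/4 + n : ℝ) / (1/4 + n))^4 * JJ (2*n+2) := by
    intro n
    have h := JJ_rec (2*n)
    push_cast at h
    rw [div_pow, div_mul_eq_mul_div, eq_div_iff (by positivity)]
    have e1 : (2*n+3/2:ℝ)^4 = 16 * (3/4+n)^4 := by ring
    have e2 : (2*n+1/2:ℝ)^4 = 16 * (1/4+n)^4 := by ring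
    rw [e1, e2] at h
    linarith
  induction n with
  | zero => rw [Finset.prod_range_one]; simpa using step 0
  | succ n ih =>
    rw [ih, Finset.prod_range_succ _ (n+1), mul_pow]
    have := step (n+1)
    rw [show 2*n+2 = 2*(n+1) by ring, this]
    push_cast
    ring

theorem JJ_zero : JJ 0 = Gamma (1/4)^8 / (128 * π^2) := by
  have h1 := Real.GammaSeq_tendsto_Gamma (1/4)
  have h3 := Real.GammaSeq_tendsto_Gamma (3/4)
  have g1 : 0 < Gamma (1/4) := Gamma_pos_of_pos (by norm_num)
  have g3 : 0 < Gamma (3/4) := Gamma_pos_of_pos (by norm_num)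
  have hlim := ((h1.div h3 g3.ne').pow 4).mul JJ_asym
  have hconst : Tendsto (fun n : ℕ => (GammaSeq (1/4) n / GammaSeq (3/4) n)^4 * ((n:ℝ)^2 * JJ (2*n+2))) atTop (𝓝 (JJ 0)) := by
    refine tendsto_const_nhds.congr' ?_
    filter_upwards [eventually_gt_atTop 0] with n hn
    have hn : (0:ℝ) < n := by exact_mod_cast hn
    rw [JJ_prod n, GammaSeq, GammaSeq]
    rw [Finset.prod_div_distrib]
    have p1 : 0 < ∏ j ∈ Finset.range (n+1), (1/4 + j : ℝ) := Finset.prod_pos (fun j _ => by positivity)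
    have p3 : 0 < ∏ j ∈ Finset.range (n+1), (3/4 + j : ℝ) := Finset.prod_pos (fun j _ => by positivity)
    have hr : (n:ℝ)^(3/4:ℝ) = (n:ℝ)^(1/4:ℝ) * (n:ℝ)^(1/2:ℝ) := by rw [← rpow_add hn]; norm_num
    have hr2 : ((n:ℝ)^(1/2:ℝ))^4 = (n:ℝ)^2 := by
      rw [← rpow_natCast, ← rpow_mul hn.le]; norm_num
    have r1 : 0 < (n:ℝ)^(1/4:ℝ) := by positivity
    have r2 : 0 < (n:ℝ)^(1/2:ℝ) := by positivity
    have f : (0:ℝ) < (n.factorial : ℝ) := by positivity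
    rw [hr, ← hr2]
    field_simp
  have := tendsto_nhds_unique hconst hlim
  rw [this]
  have hr := Real.Gamma_mul_Gamma_one_sub (1/4)
  rw [show (1 - 1/4 : ℝ) = 3/4 by norm_num, show π * (1/4) = π/4 by ring, sin_pi_div_four] at hr
  have h3e : Gamma (3/4) = π / (√2/2) / Gamma (1/4) := by rw [← hr]; field_simp
  have s4 : √2^4 = 4 := by
    rw [show √2^4 = (√2^2)^2 by ring, sq_sqrt (by norm_num)]; norm_num
  rw [h3e]
  field_simp
  rw [s4]
  ring


noncomputable def kern (m : ℂ) (θ : ℝ) : ℂ := (1 - m * ((sin θ ^ 2 : ℝ) : ℂ)) ^ ((-(1/2) : ℝ) : ℂ)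
noncomputable def Kc (m : ℂ) : ℂ := ∫ θ in (0:ℝ)..(π/2), kern m θ

theorem rpow_neg_half {x : ℝ} (hx : 0 ≤ x) : x ^ (-(1/2) : ℝ) = 1 / √x := by
  rw [rpow_neg hx, sqrt_eq_rpow, one_div, one_div]

theorem kern_norm (m : ℂ) (θ : ℝ) : ‖kern m θ‖ = 1 / √‖1 - m * ((sin θ ^ 2 : ℝ) : ℂ)‖ := by
  rw [kern, Complex.norm_cpow_real, rpow_neg_half (norm_nonneg _)]

theorem kern_real_arg (x θ : ℝ) : (1 - (x:ℂ) * ((sin θ ^ 2 : ℝ) : ℂ)) = ((1 - x * sin θ ^ 2 : ℝ) : ℂ) := by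
  push_cast; ring

theorem kern_norm_real (x θ : ℝ) : ‖kern x θ‖ = 1 / √|1 - x * sin θ ^ 2| := by
  rw [kern_norm, kern_real_arg, Complex.norm_real, Real.norm_eq_abs]

theorem kern_real_pos {x θ : ℝ} (h : 0 < 1 - x * sin θ ^ 2) : kern x θ = ((1 / √(1 - x * sin θ ^ 2) : ℝ) : ℂ) := by
  rw [kern, kern_real_arg, ← Complex.ofReal_cpow h.le, rpow_neg_half h.le]

theorem kern_real_neg {x θ : ℝ} (h : 1 - x * sin θ ^ 2 < 0) : kern x θ = -Complex.I * ((1 / √(x * sin θ ^ 2 - 1) : ℝ) : ℂ) := by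
  rw [kern, kern_real_arg, Complex.ofReal_cpow_of_nonpos h.le, ← Complex.ofReal_neg, ← Complex.ofReal_cpow (by linarith), rpow_neg_half (by linarith)]
  have : Complex.exp (π * Complex.I * ((-(1/2) : ℝ) : ℂ)) = -Complex.I := by
    rw [show (π * Complex.I * ((-(1/2) : ℝ) : ℂ)) = -(π / 2 * Complex.I) by push_cast; ring, Complex.exp_neg, Complex.exp_pi_div_two_mul_I, Complex.inv_I]
  rw [this, mul_comm, neg_sub]

theorem trig_Ioo {θ : ℝ} (h : θ ∈ Ioo 0 (π/2)) : 0 < sin θ ∧ 0 < cos θ ∧ sin θ < 1 ∧ cos θ < 1 ∧ sin θ ^ 2 + cos θ ^ 2 = 1 := by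
  have h1 : 0 < sin θ := sin_pos_of_pos_of_lt_pi h.1 (by linarith [h.2, pi_pos])
  have h2 : 0 < cos θ := cos_pos_of_mem_Ioo ⟨by linarith [h.1, pi_pos], h.2⟩
  have h3 := sin_sq_add_cos_sq θ
  exact ⟨h1, h2, by nlinarith, by nlinarith, h3⟩

def S1 (M : ℝ) : Set ℝ := {θ | θ ∈ Ioo 0 (π/2) ∧ M * sin θ ^ 2 < 1}
def S2 (M : ℝ) : Set ℝ := {θ | θ ∈ Ioo 0 (π/2) ∧ 1 < M * sin θ ^ 2}

theorem image1 {M : ℝ} (hM : 1 < M) : (fun α => arcsin (cos α / √M)) '' Ioo 0 (π/2) = S1 M := by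
  have hr : 1 < √M := by rw [lt_sqrt zero_le_one]; simpa using hM
  have hr2 : √M ^ 2 = M := sq_sqrt (by linarith)
  ext θ
  constructor
  · rintro ⟨α, hα, rfl⟩
    obtain ⟨h1, h2, h3, h4, h5⟩ := trig_Ioo hα
    have hp : 0 < cos α / √M := by positivity
    have hl : cos α / √M < 1 := by rw [div_lt_one (by linarith)]; linarith
    refine ⟨⟨arcsin_pos.2 hp, ?_⟩, ?_⟩
    · exact arcsin_lt_pi_div_two.2 hl
    · beta_reduce
      rw [sin_arcsin (by linarith) hl.le, div_pow, hr2]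
      field_simp
      nlinarith
  · rintro ⟨hθ, h⟩
    obtain ⟨h1, h2, h3, h4, h5⟩ := trig_Ioo hθ
    have hx : √M * sin θ < 1 := by
      by_contra hc
      push Not at hc
      nlinarith [mul_self_le_mul_self zero_le_one hc]
    have hx0 : 0 < √M * sin θ := by positivity
    refine ⟨arccos (√M * sin θ), ⟨arccos_pos.2 hx, arccos_lt_pi_div_two.2 hx0⟩, ?_⟩
    beta_reduce
    rw [cos_arccos (by linarith) hx.le, mul_div_cancel_left₀ _ (by positivity)]
    exact arcsin_sin (by linarith [hθ.1, pi_pos]) hθ.2.le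

theorem image2 {M : ℝ} (hM : 1 < M) : (fun α => arccos (√(1 - 1/M) * cos α)) '' Ioo 0 (π/2) = S2 M := by
  have hM1 : 1/M < 1 := by rw [div_lt_one (by linarith)]; exact hM
  have hM0 : 0 < 1/M := by positivity
  have hr : 0 < √(1 - 1/M) := sqrt_pos.2 (by linarith)
  have hr2 : √(1 - 1/M) ^ 2 = 1 - 1/M := sq_sqrt (by linarith)
  set k := √(1 - 1/M)
  have hMM : M * (1/M) = 1 := by field_simp
  have hk1 : k < 1 := by nlinarith
  ext θ
  constructor
  · rintro ⟨α, hα, rfl⟩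
    obtain ⟨h1, h2, h3, h4, h5⟩ := trig_Ioo hα
    have hp : 0 < k * cos α := by positivity
    have hl : k * cos α < 1 := by nlinarith
    refine ⟨⟨arccos_pos.2 hl, arccos_lt_pi_div_two.2 hp⟩, ?_⟩
    beta_reduce
    rw [sin_sq, cos_arccos (by linarith) hl.le, mul_pow, hr2, mul_sub, ← mul_assoc, mul_sub, hMM]
    nlinarith [mul_pos (sub_pos.2 hM) (pow_pos h1 2)]
  · rintro ⟨hθ, h⟩
    obtain ⟨h1, h2, h3, h4, h5⟩ := trig_Ioo hθ
    have hx : cos θ / k < 1 := by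
      rw [div_lt_one hr]
      by_contra hc
      push Not at hc
      have := mul_self_le_mul_self hr.le hc
      nlinarith
    have hx0 : 0 < cos θ / k := by positivity
    refine ⟨arccos (cos θ / k), ⟨arccos_pos.2 hx, arccos_lt_pi_div_two.2 hx0⟩, ?_⟩
    beta_reduce
    rw [cos_arccos (by linarith) hx.le, mul_div_cancel₀ _ hr.ne']
    exact arccos_cos hθ.1.le (by linarith [hθ.2, pi_pos])

theorem deriv1 {M : ℝ} (hM : 1 < M) {α : ℝ} (hα : α ∈ Ioo 0 (π/2)) :
    HasDerivAt (fun α => arcsin (cos α / √M)) (-(sin α / √(M - 1 + sin α ^ 2))) α := by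
  obtain ⟨h1, h2, h3, h4, h5⟩ := trig_Ioo hα
  have hr : 1 < √M := by rw [lt_sqrt zero_le_one]; simpa using hM
  have hr2 : √M ^ 2 = M := sq_sqrt (by linarith)
  have hp : 0 < cos α / √M := by positivity
  have hl : cos α / √M < 1 := by rw [div_lt_one (by linarith)]; linarith
  have h := (hasDerivAt_arcsin (x := cos α / √M) (by linarith) hl.ne).comp α ((hasDerivAt_cos α).div_const (√M))
  refine h.congr_deriv ?_
  have e : 1 - (cos α / √M)^2 = (M - 1 + sin α ^ 2) / M := by
    rw [div_pow, hr2]; field_simp; linarith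
  rw [e, sqrt_div (by nlinarith)]
  field_simp

theorem deriv2 {M : ℝ} (hM : 1 < M) {α : ℝ} (hα : α ∈ Ioo 0 (π/2)) :
    HasDerivAt (fun α => arccos (√(1 - 1/M) * cos α)) (√(M-1) * sin α / √(1 + (M - 1) * sin α ^ 2)) α := by
  obtain ⟨h1, h2, h3, h4, h5⟩ := trig_Ioo hα
  have hM1 : 1/M < 1 := by rw [div_lt_one (by linarith)]; exact hM
  have hM0 : 0 < 1/M := by positivity
  have hr : 0 < √(1 - 1/M) := sqrt_pos.2 (by linarith)
  have hr2 : √(1 - 1/M) ^ 2 = 1 - 1/M := sq_sqrt (by linarith)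
  have hMM : M * (1/M) = 1 := by field_simp
  have hk1 : √(1 - 1/M) < 1 := by nlinarith
  have hp : 0 < √(1 - 1/M) * cos α := by positivity
  have hl : √(1 - 1/M) * cos α < 1 := by nlinarith
  have h := (hasDerivAt_arccos (x := √(1 - 1/M) * cos α) (by linarith) hl.ne).comp α ((hasDerivAt_cos α).const_mul (√(1 - 1/M)))
  refine h.congr_deriv ?_
  have e : 1 - (√(1 - 1/M) * cos α)^2 = (1 + (M - 1) * sin α ^ 2) / M := by
    rw [mul_pow, hr2]; field_simp; rw [cos_sq']; ring
  have e2 : 1 - 1/M = (M-1)/M := by field_simp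
  rw [e, sqrt_div (by nlinarith), e2, sqrt_div (by linarith)]
  have : 0 < √M := sqrt_pos.2 (by linarith)
  have : 0 < √(1 + (M - 1) * sin α ^ 2) := sqrt_pos.2 (by nlinarith)
  field_simp

theorem inj1 {M : ℝ} (hM : 1 < M) : InjOn (fun α => arcsin (cos α / √M)) (Ioo 0 (π/2)) := by
  have hr : 1 < √M := by rw [lt_sqrt zero_le_one]; simpa using hM
  intro a ha b hb h
  obtain ⟨h1, h2, h3, h4, h5⟩ := trig_Ioo ha
  obtain ⟨g1, g2, g3, g4, g5⟩ := trig_Ioo hb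
  have hl : cos a / √M < 1 := by rw [div_lt_one (by linarith)]; linarith
  have hl2 : cos b / √M < 1 := by rw [div_lt_one (by linarith)]; linarith
  have hp : 0 < cos a / √M := by positivity
  have hp2 : 0 < cos b / √M := by positivity
  have := congrArg sin h
  beta_reduce at this
  rw [sin_arcsin (by linarith) hl.le, sin_arcsin (by linarith) hl2.le, div_left_inj' (by positivity)] at this
  exact injOn_cos ⟨ha.1.le, by linarith [ha.2, pi_pos]⟩ ⟨hb.1.le, by linarith [hb.2, pi_pos]⟩ this

theorem inj2 {M : ℝ} (hM : 1 < M) : InjOn (fun α => arccos (√(1 - 1/M) * cos α)) (Ioo 0 (π/2)) := by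
  have hM1 : 1/M < 1 := by rw [div_lt_one (by linarith)]; exact hM
  have hM0 : 0 < 1/M := by positivity
  have hr : 0 < √(1 - 1/M) := sqrt_pos.2 (by linarith)
  have hr2 : √(1 - 1/M) ^ 2 = 1 - 1/M := sq_sqrt (by linarith)
  have hk1 : √(1 - 1/M) < 1 := by nlinarith
  intro a ha b hb h
  obtain ⟨h1, h2, h3, h4, h5⟩ := trig_Ioo ha
  obtain ⟨g1, g2, g3, g4, g5⟩ := trig_Ioo hb
  have := congrArg cos h
  beta_reduce at this
  rw [cos_arccos (by nlinarith) (by nlinarith), cos_arccos (by nlinarith) (by nlinarith)] at this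
  exact injOn_cos ⟨ha.1.le, by linarith [ha.2, pi_pos]⟩ ⟨hb.1.le, by linarith [hb.2, pi_pos]⟩ (mul_left_cancel₀ hr.ne' this)

/-- change of variables on the first piece -/
theorem sub1 {M : ℝ} (hM : 1 < M) : IntegrableOn (fun θ => 1 / √(1 - M * sin θ ^ 2)) (S1 M) ∧
    ∫ θ in S1 M, 1 / √(1 - M * sin θ ^ 2) = qq 0 (M-1) := by
  have hr : 1 < √M := by rw [lt_sqrt zero_le_one]; simpa using hM
  have hr2 : √M ^ 2 = M := sq_sqrt (by linarith)
  have heq : ∀ α ∈ Ioo 0 (π/2), |(-(sin α / √(M - 1 + sin α ^ 2)))| • (1 / √(1 - M * sin (arcsin (cos α / √M)) ^ 2)) = FF 0 (M-1) α := by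
    intro α hα
    obtain ⟨h1, h2, h3, h4, h5⟩ := trig_Ioo hα
    have hp : 0 < cos α / √M := by positivity
    have hl : cos α / √M < 1 := by rw [div_lt_one (by linarith)]; linarith
    rw [sin_arcsin (by linarith) hl.le, div_pow, hr2, abs_neg, abs_of_nonneg (by positivity)]
    have : 1 - M * (cos α ^ 2 / M) = sin α ^ 2 := by field_simp; linarith
    rw [this, sqrt_sq h1.le, FF]
    simp only [smul_eq_mul, mul_zero, pow_zero, one_mul]
    field_simp
  have hq : IntegrableOn (FF 0 (M-1)) (Ioo 0 (π/2)) :=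
    (((cont_q0 0 (by linarith : 0 < M - 1)).intervalIntegrable 0 (π/2)).1).mono_set Ioo_subset_Ioc_self
  have hd : ∀ α ∈ Ioo 0 (π/2), HasDerivWithinAt (fun α => arcsin (cos α / √M)) (-(sin α / √(M - 1 + sin α ^ 2))) (Ioo 0 (π/2)) α :=
    fun α hα => (deriv1 hM hα).hasDerivWithinAt
  rw [← image1 hM]
  constructor
  · rw [integrableOn_image_iff_integrableOn_abs_deriv_smul measurableSet_Ioo hd (inj1 hM)]
    exact hq.congr_fun (fun α hα => (heq α hα).symm) measurableSet_Ioo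
  · rw [integral_image_eq_integral_abs_deriv_smul measurableSet_Ioo hd (inj1 hM), qq_eq_FF,
      intervalIntegral.integral_of_le (by positivity), integral_Ioc_eq_integral_Ioo]
    exact setIntegral_congr_fun measurableSet_Ioo heq

theorem sub2 {M : ℝ} (hM : 1 < M) : IntegrableOn (fun θ => 1 / √(M * sin θ ^ 2 - 1)) (S2 M) ∧
    ∫ θ in S2 M, 1 / √(M * sin θ ^ 2 - 1) = yy (M-1) := by
  have hM1 : 1/M < 1 := by rw [div_lt_one (by linarith)]; exact hM
  have hM0 : 0 < 1/M := by positivity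
  have hr : 0 < √(1 - 1/M) := sqrt_pos.2 (by linarith)
  have hr2 : √(1 - 1/M) ^ 2 = 1 - 1/M := sq_sqrt (by linarith)
  have hk1 : √(1 - 1/M) < 1 := by nlinarith
  have hMM : M * (1/M) = 1 := by field_simp
  have heq : ∀ α ∈ Ioo 0 (π/2), |√(M-1) * sin α / √(1 + (M - 1) * sin α ^ 2)| • (1 / √(M * sin (arccos (√(1 - 1/M) * cos α)) ^ 2 - 1)) = 1 / √(1 + (M-1) * sin α ^ 2) := by
    intro α hα
    obtain ⟨h1, h2, h3, h4, h5⟩ := trig_Ioo hα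
    have h6 : 0 < √(M-1) := sqrt_pos.2 (by linarith)
    rw [sin_sq (arccos _), cos_arccos (by nlinarith) (by nlinarith), abs_of_nonneg (by positivity), mul_pow, hr2]
    have : M * (1 - (1 - 1 / M) * cos α ^ 2) - 1 = (M-1) * sin α ^ 2 := by rw [cos_sq']; field_simp; ring
    rw [this, sqrt_mul (by linarith), sqrt_sq h1.le]
    simp only [smul_eq_mul]
    field_simp
  have hq : IntegrableOn (fun α => 1 / √(1 + (M-1) * sin α ^ 2)) (Ioo 0 (π/2)) :=
    (((cont_y0 (by linarith : 0 < M - 1)).intervalIntegrable 0 (π/2)).1).mono_set Ioo_subset_Ioc_self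
  have hd : ∀ α ∈ Ioo 0 (π/2), HasDerivWithinAt (fun α => arccos (√(1 - 1/M) * cos α)) (√(M-1) * sin α / √(1 + (M - 1) * sin α ^ 2)) (Ioo 0 (π/2)) α :=
    fun α hα => (deriv2 hM hα).hasDerivWithinAt
  rw [← image2 hM]
  constructor
  · rw [integrableOn_image_iff_integrableOn_abs_deriv_smul measurableSet_Ioo hd (inj2 hM)]
    exact hq.congr_fun (fun α hα => (heq α hα).symm) measurableSet_Ioo
  · rw [integral_image_eq_integral_abs_deriv_smul measurableSet_Ioo hd (inj2 hM), yy,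
      intervalIntegral.integral_of_le (by positivity), integral_Ioc_eq_integral_Ioo]
    exact setIntegral_congr_fun measurableSet_Ioo heq


theorem kern_meas (m : ℂ) : Measurable (kern m) := by
  unfold kern
  have : Measurable (fun θ : ℝ => 1 - m * ((sin θ ^ 2 : ℝ) : ℂ)) := by fun_prop
  exact this.pow_const _

theorem sing_null (x : ℝ) : volume {θ : ℝ | θ ∈ Ioc 0 (π/2) ∧ x * sin θ ^ 2 = 1} = 0 := by
  refine Set.Subsingleton.measure_zero ?_ _
  rintro a ⟨ha, hxa⟩ b ⟨hb, hxb⟩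
  have h1 := sin_pos' ha
  have h2 := sin_pos' hb
  have hx : x ≠ 0 := by rintro rfl; simp at hxa
  have : sin a ^ 2 = sin b ^ 2 := mul_left_cancel₀ hx (hxa.trans hxb.symm)
  have h3 : sin a = sin b := by
    rcases sq_eq_sq_iff_eq_or_eq_neg.1 this with h | h
    · exact h
    · linarith
  exact injOn_sin ⟨by linarith [ha.1, pi_pos], ha.2⟩ ⟨by linarith [hb.1, pi_pos], hb.2⟩ h3

theorem kern_ae_ne (x : ℝ) : ∀ᵐ θ : ℝ, θ ∈ Ioc 0 (π/2) → 1 - x * sin θ ^ 2 ≠ 0 := by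
  rw [ae_iff]
  convert sing_null x using 2
  ext θ
  simp only [Set.mem_ofPred_eq, Classical.not_imp, not_not]
  constructor
  · rintro ⟨h1, h2⟩; exact ⟨h1, by linarith⟩
  · rintro ⟨h1, h2⟩; exact ⟨h1, by linarith⟩

theorem kern_dom (x y : ℝ) : ∀ᵐ θ : ℝ, θ ∈ Ioc 0 (π/2) → ‖kern (⟨x, y⟩ : ℂ) θ‖ ≤ ‖kern (x:ℂ) θ‖ := by
  filter_upwards [kern_ae_ne x] with θ h hθ
  have hne := h hθ
  rw [kern_norm_real, kern_norm]
  have h1 : |1 - x * sin θ ^ 2| ≤ ‖1 - (⟨x, y⟩ : ℂ) * ((sin θ ^ 2 : ℝ) : ℂ)‖ := by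
    have := Complex.abs_re_le_norm (1 - (⟨x, y⟩ : ℂ) * ((sin θ ^ 2 : ℝ) : ℂ))
    rw [Complex.sub_re, Complex.re_mul_ofReal, Complex.one_re] at this
    exact this
  have h2 : 0 < |1 - x * sin θ ^ 2| := abs_pos.2 hne
  exact one_div_le_one_div_of_le (sqrt_pos.2 h2) (sqrt_le_sqrt h1)

theorem S_ae (M : ℝ) : (Ioc 0 (π/2) : Set ℝ) =ᵐ[volume] (S1 M ∪ S2 M : Set ℝ) := by
  have h : (Ioo 0 (π/2) : Set ℝ) =ᵐ[volume] (S1 M ∪ S2 M : Set ℝ) := by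
    filter_upwards [kern_ae_ne M] with θ h
    apply propext
    constructor
    · intro hθ
      have := h ⟨hθ.1, hθ.2.le⟩
      rcases lt_or_gt_of_ne (fun hh => this (by linarith) : M * sin θ ^ 2 ≠ 1) with g | g
      · exact Or.inl ⟨hθ, g⟩
      · exact Or.inr ⟨hθ, g⟩
    · rintro (h | h) <;> exact h.1
  exact Ioo_ae_eq_Ioc.symm.trans h

theorem S1_meas (M : ℝ) : MeasurableSet (S1 M) :=
  measurableSet_Ioo.inter (measurableSet_lt (by fun_prop : Measurable fun θ : ℝ => M * sin θ ^ 2) measurable_const)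
theorem S2_meas (M : ℝ) : MeasurableSet (S2 M) :=
  measurableSet_Ioo.inter (measurableSet_lt measurable_const (by fun_prop : Measurable fun θ : ℝ => M * sin θ ^ 2))
theorem S_disj (M : ℝ) : Disjoint (S1 M) (S2 M) := by
  rw [Set.disjoint_left]; rintro θ ⟨_, h1⟩ ⟨_, h2⟩; linarith

theorem kern_gt {M : ℝ} (hM : 1 < M) : IntervalIntegrable (kern (M:ℂ)) volume 0 (π/2) ∧
    Kc M = (qq 0 (M-1) : ℂ) - Complex.I * (yy (M-1) : ℂ) ∧
    ∫ θ in (0:ℝ)..(π/2), ‖kern (M:ℂ) θ‖ = qq 0 (M-1) + yy (M-1) := by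
  have hpi : (0:ℝ) ≤ π/2 := by positivity
  have e1 : ∀ θ ∈ S1 M, kern (M:ℂ) θ = ((1 / √(1 - M * sin θ ^ 2) : ℝ) : ℂ) := fun θ h => kern_real_pos (by linarith [h.2])
  have e2 : ∀ θ ∈ S2 M, kern (M:ℂ) θ = -Complex.I * ((1 / √(M * sin θ ^ 2 - 1) : ℝ) : ℂ) := fun θ h => kern_real_neg (by linarith [h.2])
  have i1 : IntegrableOn (kern (M:ℂ)) (S1 M) := by
    have : IntegrableOn (fun θ => ((1 / √(1 - M * sin θ ^ 2) : ℝ) : ℂ)) (S1 M) := (sub1 hM).1.ofReal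
    exact this.congr_fun (fun θ h => (e1 θ h).symm) (S1_meas M)
  have i2 : IntegrableOn (kern (M:ℂ)) (S2 M) := by
    have : IntegrableOn (fun θ => -Complex.I * ((1 / √(M * sin θ ^ 2 - 1) : ℝ) : ℂ)) (S2 M) := (sub2 hM).1.ofReal.const_mul _
    exact this.congr_fun (fun θ h => (e2 θ h).symm) (S2_meas M)
  refine ⟨?_, ?_, ?_⟩
  · rw [intervalIntegrable_iff_integrableOn_Ioc_of_le hpi, integrableOn_congr_set_ae (S_ae M)]
    exact i1.union i2
  · rw [Kc, intervalIntegral.integral_of_le hpi, setIntegral_congr_set (S_ae M), setIntegral_union (S_disj M) (S2_meas M) i1 i2,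
      setIntegral_congr_fun (S1_meas M) e1, setIntegral_congr_fun (S2_meas M) e2, MeasureTheory.integral_const_mul,
      integral_complex_ofReal, integral_complex_ofReal, (sub1 hM).2, (sub2 hM).2]
    ring
  · rw [intervalIntegral.integral_of_le hpi, setIntegral_congr_set (S_ae M), setIntegral_union (S_disj M) (S2_meas M) i1.norm i2.norm,
      ← (sub1 hM).2, ← (sub2 hM).2]
    congr 1
    · refine setIntegral_congr_fun (S1_meas M) (fun θ h => ?_)
      beta_reduce
      rw [e1 θ h, Complex.norm_real, norm_of_nonneg (by positivity)]
    · refine setIntegral_congr_fun (S2_meas M) (fun θ h => ?_)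
      beta_reduce
      rw [e2 θ h, norm_mul, norm_neg, Complex.norm_I, one_mul, Complex.norm_real, norm_of_nonneg (by positivity)]

theorem lt_pos {x : ℝ} (hx : x < 1) (θ : ℝ) : 0 < 1 - x * sin θ ^ 2 := by
  have := sin_sq_le_one θ
  have := sq_nonneg (sin θ)
  by_cases h : 0 ≤ x
  · nlinarith
  · nlinarith

theorem lt_cont {x : ℝ} (hx : x < 1) : Continuous (fun θ => 1 / √(1 - x * sin θ ^ 2)) := by
  refine continuous_const.div (by fun_prop) (fun θ => (sqrt_pos.2 (lt_pos hx θ)).ne')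

noncomputable def KR (x : ℝ) : ℝ := ∫ θ in (0:ℝ)..(π/2), 1 / √(1 - x * sin θ ^ 2)

theorem kern_lt {x : ℝ} (hx : x < 1) : IntervalIntegrable (kern (x:ℂ)) volume 0 (π/2) ∧
    Kc x = (KR x : ℂ) ∧ ∫ θ in (0:ℝ)..(π/2), ‖kern (x:ℂ) θ‖ = KR x := by
  have e : kern (x:ℂ) = fun θ => ((1 / √(1 - x * sin θ ^ 2) : ℝ) : ℂ) := funext fun θ => kern_real_pos (lt_pos hx θ)
  refine ⟨?_, ?_, ?_⟩
  · rw [e]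
    exact (Complex.continuous_ofReal.comp (lt_cont hx)).intervalIntegrable _ _
  · rw [Kc, e, intervalIntegral.integral_ofReal, KR]
  · rw [e, KR]
    congr 1
    ext θ
    rw [Complex.norm_real, norm_of_nonneg (by positivity)]

theorem KR_neg (z : ℝ) : KR (-z) = yy z := by
  unfold KR yy; congr 1; ext θ; rw [neg_mul, sub_neg_eq_add]

noncomputable def NN (x : ℝ) : ℝ := ∫ θ in (0:ℝ)..(π/2), ‖kern (x:ℂ) θ‖

theorem kern_intble {x : ℝ} (hx : x ≠ 1) : IntervalIntegrable (kern (x:ℂ)) volume 0 (π/2) := by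
  rcases lt_or_gt_of_ne hx with h | h
  · exact (kern_lt h).1
  · exact (kern_gt h).1

theorem Kc_norm_le (x y : ℝ) (hx : x ≠ 1) : ‖Kc ⟨x, y⟩‖ ≤ NN x := by
  refine intervalIntegral.norm_integral_le_of_norm_le (by positivity) ?_ (kern_intble hx).norm
  exact kern_dom x y

theorem NN_nonneg (x : ℝ) : 0 ≤ NN x :=
  intervalIntegral.integral_nonneg (by positivity) (fun _ _ => norm_nonneg _)

theorem NN_le {x : ℝ} (h0 : x ≠ 0) (h1 : x ≠ 1) : NN x ≤ 2 * C0 * (|1 - x| ^ (-(1/8) : ℝ) * |x| ^ (-(1/4) : ℝ)) := by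
  have hC := C0_nonneg
  have split : ∀ u : ℝ, 0 < u → u ^ (-(3/8) : ℝ) = u ^ (-(1/8) : ℝ) * u ^ (-(1/4) : ℝ) := by
    intro u hu; rw [← rpow_add hu]; norm_num
  have mono : ∀ a u v : ℝ, 0 < u → u ≤ v → v ^ (-a) ≤ u ^ (-a) ∨ a < 0 := by
    intro a u v hu huv
    by_cases ha : 0 ≤ a
    · exact Or.inl (rpow_le_rpow_of_nonpos hu huv (by linarith))
    · exact Or.inr (by linarith)
  rcases lt_or_gt_of_ne h1 with h | h
  · rcases lt_or_gt_of_ne h0 with g | g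
    · -- negative
      have e : NN x = yy (-x) := by rw [NN, (kern_lt h).2.2, ← KR_neg, neg_neg]
      rw [e]
      have hy := yy_le (z := -x) (by linarith)
      refine hy.trans ?_
      rw [abs_of_pos (by linarith), abs_of_neg g, split _ (by linarith), ← sub_eq_add_neg]
      have a1 : (1 - x) ^ (-(1/4) : ℝ) ≤ (-x) ^ (-(1/4) : ℝ) := rpow_le_rpow_of_nonpos (by linarith) (by linarith) (by norm_num)
      have a2 : 0 ≤ (1 - x) ^ (-(1/8) : ℝ) := rpow_nonneg (by linarith) _
      have a3 : 0 ≤ (-x) ^ (-(1/4) : ℝ) := rpow_nonneg (by linarith) _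
      calc (1 - x) ^ (-(1/8) : ℝ) * (1 - x) ^ (-(1/4) : ℝ) * C0 ≤ (1 - x) ^ (-(1/8) : ℝ) * (-x) ^ (-(1/4) : ℝ) * C0 := by gcongr
        _ ≤ _ := by nlinarith [mul_nonneg (mul_nonneg a2 a3) hC]
    · -- between 0 and 1
      have e : NN x = KR x := by rw [NN, (kern_lt h).2.2]
      have hb : KR x ≤ (1-x) ^ (-(1/8) : ℝ) * C0 := by
        rw [C0_cos, ← intervalIntegral.integral_const_mul]
        refine intervalIntegral.integral_mono_on_of_le_Ioo (by positivity) ((lt_cont h).intervalIntegrable _ _) (intble_cos.const_mul _) ?_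
        intro θ hθ
        obtain ⟨t1, t2, t3, t4, t5⟩ := trig_Ioo hθ
        have := kernel_bound (v := 1 - x * sin θ ^ 2) (a := 1 - x) (b := 1) (s := cos θ) (by linarith) one_pos t2 (by nlinarith) (by nlinarith)
        simpa using this
      rw [e]
      refine hb.trans ?_
      rw [abs_of_pos (by linarith), abs_of_pos g]
      have a1 : 1 ≤ x ^ (-(1/4) : ℝ) := one_le_rpow_of_pos_of_le_one_of_nonpos g h.le (by norm_num)
      have a2 : 0 ≤ (1 - x) ^ (-(1/8) : ℝ) := rpow_nonneg (by linarith) _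
      calc (1 - x) ^ (-(1/8) : ℝ) * C0 ≤ C0 * ((1 - x) ^ (-(1/8) : ℝ) * x ^ (-(1/4) : ℝ)) := by
              nlinarith [mul_nonneg a2 hC]
        _ ≤ _ := by nlinarith [mul_nonneg (mul_nonneg a2 (by linarith : 0 ≤ x ^ (-(1/4) : ℝ))) hC]
  · have e : NN x = qq 0 (x-1) + yy (x-1) := (kern_gt h).2.2
    have b1 := qq0_le (z := x-1) (by linarith)
    have b2 := yy_le (z := x-1) (by linarith)
    rw [add_sub_cancel] at b1 b2
    rw [e, abs_of_neg (by linarith), neg_sub, abs_of_pos (by linarith)]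
    have hxp : 0 < x := by linarith
    have a1 : x ^ (-(3/8) : ℝ) ≤ x ^ (-(1/4) : ℝ) := rpow_le_rpow_of_exponent_le h.le (by norm_num)
    have a2 : x ^ (-(1/8) : ℝ) ≤ (x-1) ^ (-(1/8) : ℝ) := rpow_le_rpow_of_nonpos (by linarith) (by linarith) (by norm_num)
    have a3 : 0 ≤ (x-1) ^ (-(1/8) : ℝ) := rpow_nonneg (by linarith) _
    have a4 : 0 ≤ x ^ (-(1/4) : ℝ) := rpow_nonneg (by linarith) _
    have c1 : (x-1) ^ (-(1/8) : ℝ) * x ^ (-(3/8) : ℝ) * C0 ≤ (x-1) ^ (-(1/8) : ℝ) * x ^ (-(1/4) : ℝ) * C0 := by gcongr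
    have c2 : x ^ (-(3/8) : ℝ) * C0 ≤ (x-1) ^ (-(1/8) : ℝ) * x ^ (-(1/4) : ℝ) * C0 := by
      rw [split _ hxp]; gcongr
    linarith

theorem slit {m : ℂ} (hm : m.im ≠ 0) (θ : ℝ) : (1 - m * ((sin θ ^ 2 : ℝ) : ℂ)) ∈ Complex.slitPlane := by
  rw [Complex.mem_slitPlane_iff]
  by_cases h : sin θ = 0
  · left; simp [h]
  · right
    rw [Complex.sub_im, Complex.im_mul_ofReal, Complex.one_im, zero_sub, neg_ne_zero]
    positivity

theorem Kc_conj {m : ℂ} (hm : m.im ≠ 0) : Kc ((starRingEnd ℂ) m) = (starRingEnd ℂ) (Kc m) := by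
  unfold Kc
  have : ∀ θ, kern ((starRingEnd ℂ) m) θ = (starRingEnd ℂ) (kern m θ) := by
    intro θ
    unfold kern
    have h := slit hm θ
    have := Complex.conj_cpow (1 - m * ((sin θ ^ 2 : ℝ) : ℂ)) ((-(1/2) : ℝ) : ℂ) (Complex.slitPlane_arg_ne_pi h)
    rw [Complex.conj_ofReal] at this
    rw [← this, map_sub, map_mul, Complex.conj_ofReal, map_one]
  simp only [this]
  rw [intervalIntegral.integral_of_le (by positivity), intervalIntegral.integral_of_le (by positivity)]
  exact integral_conj

theorem kern_tendsto {x θ : ℝ} (h : 1 - x * sin θ ^ 2 ≠ 0) :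
    Tendsto (fun ε : ℝ => kern ⟨x, -ε⟩ θ) (𝓝[>] 0) (𝓝 (kern x θ)) := by
  have key : ContinuousWithinAt (fun w : ℂ => w ^ ((-(1/2) : ℝ) : ℂ)) {z | 0 ≤ z.im} ((1 - x * sin θ ^ 2 : ℝ) : ℂ) := by
    rcases lt_or_gt_of_ne h with g | g
    · have hl := Complex.continuousWithinAt_log_of_re_neg_of_im_zero (z := ((1 - x * sin θ ^ 2 : ℝ) : ℂ)) (by rw [Complex.ofReal_re]; exact g) (Complex.ofReal_im _)
      have h2 := (hl.mul_const ((-(1/2) : ℝ) : ℂ)).cexp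
      have hne : ((1 - x * sin θ ^ 2 : ℝ) : ℂ) ≠ 0 := by exact_mod_cast h
      refine h2.congr_of_eventuallyEq ?_ (Complex.cpow_def_of_ne_zero hne _)
      have : ∀ᶠ w : ℂ in 𝓝 ((1 - x * sin θ ^ 2 : ℝ) : ℂ), w ≠ 0 := isOpen_ne.mem_nhds hne
      filter_upwards [mem_nhdsWithin_of_mem_nhds this] with w hw
      exact Complex.cpow_def_of_ne_zero hw _
    · have : ((1 - x * sin θ ^ 2 : ℝ) : ℂ) ∈ Complex.slitPlane := Complex.ofReal_mem_slitPlane.2 g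
      exact (continuousAt_cpow_const this).continuousWithinAt
  have ht : Tendsto (fun ε : ℝ => 1 - (⟨x, -ε⟩ : ℂ) * ((sin θ ^ 2 : ℝ) : ℂ)) (𝓝[>] 0) (𝓝[{z | 0 ≤ z.im}] ((1 - x * sin θ ^ 2 : ℝ) : ℂ)) := by
    rw [tendsto_nhdsWithin_iff]
    constructor
    · have hc : Continuous (fun ε : ℝ => 1 - ((x:ℂ) - ε * Complex.I) * ((sin θ ^ 2 : ℝ) : ℂ)) := by fun_prop
      have := hc.tendsto 0
      have e : ∀ ε : ℝ, (⟨x, -ε⟩ : ℂ) = (x:ℂ) - ε * Complex.I := by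
        intro ε; apply Complex.ext <;> simp
      simp only [e]
      refine (this.mono_left nhdsWithin_le_nhds).trans (le_of_eq ?_)
      congr 1
      rw [← kern_real_arg]; simp
    · filter_upwards [self_mem_nhdsWithin] with ε hε
      have hε0 : (0:ℝ) < ε := hε
      change 0 ≤ (1 - (⟨x, -ε⟩ : ℂ) * ((sin θ ^ 2 : ℝ) : ℂ)).im
      rw [Complex.sub_im, Complex.im_mul_ofReal, Complex.one_im, zero_sub]
      have := mul_nonneg hε0.le (sq_nonneg (sin θ))
      simp only; linarith
  have := Tendsto.comp key ht
  rw [← kern_real_arg] at this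
  exact this

theorem Kc_tendsto {x : ℝ} (hx : x ≠ 1) : Tendsto (fun ε : ℝ => Kc ⟨x, -ε⟩) (𝓝[>] 0) (𝓝 (Kc x)) := by
  have hpi : (0:ℝ) ≤ π/2 := by positivity
  refine intervalIntegral.tendsto_integral_filter_of_dominated_convergence (fun θ => ‖kern (x:ℂ) θ‖) ?_ ?_ (kern_intble hx).norm ?_
  · exact Eventually.of_forall fun ε => (kern_meas _).aestronglyMeasurable
  · refine Eventually.of_forall fun ε => ?_
    rw [uIoc_of_le hpi]
    exact kern_dom x (-ε)
  · rw [uIoc_of_le hpi]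
    filter_upwards [kern_ae_ne x] with θ h hθ
    exact kern_tendsto (h hθ)

theorem Kc_tendsto' {x : ℝ} (hx : x ≠ 0) : Tendsto (fun ε : ℝ => Kc (1 - ⟨x, -ε⟩)) (𝓝[>] 0) (𝓝 ((starRingEnd ℂ) (Kc ((1 - x : ℝ) : ℂ)))) := by
  have h := (Complex.continuous_conj.tendsto _).comp (Kc_tendsto (x := 1 - x) (fun h => hx (by linarith)))
  refine h.congr' ?_
  filter_upwards [self_mem_nhdsWithin] with ε hε
  have hε0 : (0:ℝ) < ε := hε
  rw [Function.comp, ← Kc_conj (by simp; linarith)]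
  congr 1
  apply Complex.ext <;> simp


theorem hasDerivAt_Kc {m : ℂ} (hm : m.im ≠ 0) : ∃ d, HasDerivAt Kc d m := by
  set s : Set ℂ := {z | z.im ≠ 0} with hsdef
  have hs : IsOpen s := isOpen_ne.preimage Complex.continuous_im
  set F' : ℂ → ℝ → ℂ := fun m θ => ((-(1/2) : ℝ) : ℂ) * (1 - m * ((sin θ ^ 2 : ℝ) : ℂ)) ^ (((-(1/2) : ℝ) : ℂ) - 1) * (-((sin θ ^ 2 : ℝ) : ℂ)) with hF'def
  have hb : (0:ℝ) ≤ π/2 := by positivity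
  have hd : ∀ z ∈ s, ∀ θ, HasDerivAt (fun z => kern z θ) (F' z θ) z := by
    intro z hz θ
    have h1 : HasDerivAt (fun z : ℂ => 1 - z * ((sin θ ^ 2 : ℝ) : ℂ)) (-((sin θ ^ 2 : ℝ) : ℂ)) z := by
      have := ((hasDerivAt_id z).mul_const ((sin θ ^ 2 : ℝ) : ℂ)).const_sub 1
      rw [one_mul] at this
      exact this
    exact h1.cpow_const (slit hz θ)
  have hF' : ContinuousOn (fun p : ℂ × ℝ => F' p.1 p.2) (s ×ˢ univ) := by
    rintro ⟨z, θ⟩ ⟨hz, -⟩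
    apply ContinuousAt.continuousWithinAt
    simp only [hF'def]
    refine ContinuousAt.mul (ContinuousAt.mul continuousAt_const ?_) (by fun_prop)
    refine ContinuousAt.cpow (by fun_prop) continuousAt_const (slit hz θ)
  have hFc : ∀ z ∈ s, Continuous (kern z) := by
    intro z hz
    rw [continuous_iff_continuousAt]
    intro θ
    unfold kern
    refine ContinuousAt.cpow (by fun_prop) continuousAt_const (slit hz θ)
  obtain ⟨ε, hε, hball⟩ := Metric.isOpen_iff.1 hs m hm
  have hsub : Metric.closedBall m (ε/2) ⊆ s :=
    (Metric.closedBall_subset_ball (by linarith)).trans hball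
  have hcomp : IsCompact (Metric.closedBall m (ε/2) ×ˢ Icc (0:ℝ) (π/2)) :=
    (isCompact_closedBall _ _).prod isCompact_Icc
  obtain ⟨C, hC⟩ := hcomp.exists_bound_of_continuousOn
    (hF'.mono (prod_mono hsub (subset_univ _)))
  have hF'z : Continuous (F' m) := by
    have : ContinuousOn (fun θ : ℝ => F' m θ) univ :=
      hF'.comp (f := fun θ : ℝ => (m, θ)) (by fun_prop) (fun θ _ => ⟨hm, mem_univ _⟩)
    exact continuousOn_univ.1 this
  refine ⟨_, (intervalIntegral.hasDerivAt_integral_of_dominated_loc_of_deriv_le (F := kern) (F' := F')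
    (s := Metric.closedBall m (ε/2)) (bound := fun _ => C) (Metric.closedBall_mem_nhds m (by linarith)) ?_ ?_ ?_ ?_ ?_ ?_).2⟩
  · filter_upwards [hs.mem_nhds hm] with x hx
    exact (hFc x hx).aestronglyMeasurable
  · exact (hFc m hm).intervalIntegrable _ _
  · exact hF'z.aestronglyMeasurable
  · refine Eventually.of_forall (fun θ hθ x hx => ?_)
    rw [uIoc_of_le hb] at hθ
    exact hC (x, θ) ⟨hx, hθ.1.le, hθ.2⟩
  · exact intervalIntegrable_const
  · exact Eventually.of_forall (fun θ hθ x hx => hd x (hsub hx) θ)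

theorem intOn_gen {a b : ℝ} (ha : 0 ≤ a) (hb0 : 0 ≤ b) (hb : b < 1) (hab : 1 < a + b) : IntegrableOn (fun z : ℝ => z ^ (-b) * (1+z) ^ (-a)) (Ioi 0) := by
  have hm : Measurable (fun z : ℝ => z ^ (-b) * (1+z) ^ (-a)) := by fun_prop
  rw [← Ioc_union_Ioi_eq_Ioi (zero_le_one' ℝ)]
  refine IntegrableOn.union ?_ ?_
  · have h : IntegrableOn (fun z : ℝ => z ^ (-b)) (Ioc 0 1) :=
      (intervalIntegrable_iff_integrableOn_Ioc_of_le zero_le_one).1 (intervalIntegrable_rpow' (by linarith))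
    refine h.mono' hm.aestronglyMeasurable ?_
    refine (ae_restrict_iff' measurableSet_Ioc).2 (Eventually.of_forall fun z hz => ?_)
    have h0 : 0 < z := hz.1
    rw [norm_of_nonneg (by positivity)]
    have : (1+z) ^ (-a) ≤ 1 := rpow_le_one_of_one_le_of_nonpos (by linarith) (by linarith)
    have h2 : 0 ≤ z ^ (-b) := by positivity
    nlinarith
  · have h : IntegrableOn (fun z : ℝ => z ^ (-(a+b))) (Ioi 1) := integrableOn_Ioi_rpow_of_lt (by linarith) one_pos
    refine h.mono' hm.aestronglyMeasurable ?_
    refine (ae_restrict_iff' measurableSet_Ioi).2 (Eventually.of_forall fun z hz => ?_)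
    have h0 : 1 < z := hz
    have h00 : 0 < z := by linarith
    rw [norm_of_nonneg (by positivity)]
    have h1 : (1+z) ^ (-a) ≤ z ^ (-a) := rpow_le_rpow_of_nonpos h00 (by linarith) (by linarith)
    have h2 : 0 ≤ z ^ (-b) := by positivity
    calc _ ≤ z ^ (-b) * z ^ (-a) := by gcongr
      _ = _ := by rw [← rpow_add h00]; ring_nf

theorem int_gen {a b : ℝ} (ha : 0 ≤ a) (hb0 : 0 ≤ b) (hb : b < 1) (hab : 1 < a + b) : Integrable (fun x : ℝ => |x| ^ (-b) * (1+|x|) ^ (-a)) := by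
  have h : IntegrableOn (fun x : ℝ => |x| ^ (-b) * (1+|x|) ^ (-a)) (Ioi 0) :=
    (intOn_gen ha hb0 hb hab).congr_fun (fun z hz => by rw [abs_of_pos hz]) measurableSet_Ioi
  have h2 : IntegrableOn (fun x : ℝ => |x| ^ (-b) * (1+|x|) ^ (-a)) (Iic 0) := by
    have := (integrable_indicator_iff measurableSet_Ioi).2 h
    rw [← integrableOn_Ici_iff_integrableOn_Ioi] at h
    have := h.comp_neg
    simpa using this
  rw [← integrableOn_univ, ← Iic_union_Ioi (a := (0:ℝ))]
  exact h2.union h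

noncomputable def ww (a b x : ℝ) : ℝ := |1 - x| ^ (-a) * |x| ^ (-b)

theorem ww_nonneg (a b x : ℝ) : 0 ≤ ww a b x := by unfold ww; positivity

theorem ww_int {a b : ℝ} (ha : 0 ≤ a) (ha1 : a < 1) (hb0 : 0 ≤ b) (hb : b < 1) (hab : 1 < a + b) : Integrable (ww a b) := by
  have i1 := (int_gen ha hb0 hb hab).const_mul ((3:ℝ)^a)
  have i2 := ((int_gen hb0 ha ha1 (by linarith)).comp_sub_left 1).const_mul ((3:ℝ)^b)
  refine (i1.add i2).mono' ?_ ?_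
  · apply Measurable.aestronglyMeasurable
    unfold ww; fun_prop
  · have hae : ∀ᵐ x : ℝ, x ≠ 0 ∧ x ≠ 1 := by
      have h1 : ∀ᵐ x : ℝ, x ≠ 0 := by simp [ae_iff, measure_singleton]
      have h2 : ∀ᵐ x : ℝ, x ≠ 1 := by simp [ae_iff, measure_singleton]
      filter_upwards [h1, h2] with x a b using ⟨a, b⟩
    filter_upwards [hae] with x hx
    rw [norm_of_nonneg (ww_nonneg _ _ _)]
    simp only [Pi.add_apply, ww]
    have hu : 0 < |x| := abs_pos.2 hx.1
    have hv : 0 < |1 - x| := abs_pos.2 (fun h => hx.2 (by linarith))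
    have huv : 1 ≤ |x| + |1 - x| := by
      have := abs_add_le x (1 - x)
      rwa [add_sub_cancel, abs_one] at this
    set u := |x|
    set v := |1 - x|
    have key : ∀ c p q : ℝ, 0 ≤ c → 0 < p → p ≤ 3 * q → q ^ (-c) ≤ 3^c * p ^ (-c) := by
      intro c p q hc hp hq
      have : 3 ^ c * p ^ (-c) = (p/3) ^ (-c) := by
        rw [div_rpow hp.le (by norm_num), rpow_neg (by norm_num : (0:ℝ) ≤ 3), div_inv_eq_mul, mul_comm]
      rw [this]
      exact rpow_le_rpow_of_nonpos (by linarith) (by linarith) (by linarith)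
    have n1 : 0 ≤ 3 ^ a * (u ^ (-b) * (1 + u) ^ (-a)) := by positivity
    have n2 : 0 ≤ 3 ^ b * (v ^ (-a) * (1 + v) ^ (-b)) := by positivity
    rcases le_total u v with h | h
    · have := key a (1+u) v ha (by linarith) (by linarith)
      calc _ ≤ (3^a * (1+u) ^ (-a)) * u ^ (-b) := by gcongr
        _ ≤ _ := by linarith
    · have := key b (1+v) u hb0 (by linarith) (by linarith)
      calc _ ≤ v ^ (-a) * (3^b * (1+v) ^ (-b)) := by gcongr
        _ ≤ _ := by linarith

noncomputable def phi (m : ℂ) : ℂ := Kc m ^ 2 * ((3 - 2 * Complex.I) * Kc (1 - m) - Complex.I * Kc m)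

theorem coef_bound (A B : ℂ) (a b : ℝ) (hA : ‖A‖ ≤ a) (hB : ‖B‖ ≤ b) :
    ‖A ^ 2 * ((3 - 2 * Complex.I) * B - Complex.I * A)‖ ≤ a ^ 2 * (5 * b + a) := by
  have h5 : ‖(3 - 2 * Complex.I : ℂ)‖ ≤ 5 := by
    refine (norm_sub_le _ _).trans ?_
    rw [norm_mul, Complex.norm_I]; norm_num
  have ha : 0 ≤ a := (norm_nonneg _).trans hA
  have hb : 0 ≤ b := (norm_nonneg _).trans hB
  rw [norm_mul, norm_pow]
  have : ‖(3 - 2 * Complex.I) * B - Complex.I * A‖ ≤ 5 * b + a := by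
    refine (norm_sub_le _ _).trans ?_
    rw [norm_mul, norm_mul, Complex.norm_I, one_mul]
    gcongr
  gcongr

noncomputable def Psi (x : ℝ) : ℝ := 8 * C0^3 * (5 * ww (1/2) (5/8) x + ww (3/8) (3/4) x)

theorem Psi_int : Integrable Psi := by
  have h1 := ww_int (a := 1/2) (b := 5/8) (by norm_num) (by norm_num) (by norm_num) (by norm_num) (by norm_num)
  have h2 := ww_int (a := 3/8) (b := 3/4) (by norm_num) (by norm_num) (by norm_num) (by norm_num) (by norm_num)
  exact ((h1.const_mul 5).add h2).const_mul _

theorem NN_Psi {x : ℝ} (h0 : x ≠ 0) (h1 : x ≠ 1) : NN x ^ 2 * (5 * NN (1-x) + NN x) ≤ Psi x := by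
  have a := NN_le h0 h1
  have b := NN_le (x := 1 - x) (fun h => h1 (by linarith)) (fun h => h0 (by linarith))
  rw [sub_sub_cancel] at b
  have hu : 0 < |x| := abs_pos.2 h0
  have hv : 0 < |1 - x| := abs_pos.2 (fun h => h1 (by linarith))
  unfold Psi ww
  set u := |x|
  set v := |1 - x|
  have hC := C0_nonneg
  have n1 := NN_nonneg x
  have n2 := NN_nonneg (1 - x)
  have e1 : v ^ (-(1/2) : ℝ) = v ^ (-(1/8) : ℝ) * v ^ (-(1/8) : ℝ) * v ^ (-(1/4) : ℝ) := by
    rw [← rpow_add hv, ← rpow_add hv]; norm_num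
  have e2 : u ^ (-(5/8) : ℝ) = u ^ (-(1/4) : ℝ) * u ^ (-(1/4) : ℝ) * u ^ (-(1/8) : ℝ) := by
    rw [← rpow_add hu, ← rpow_add hu]; norm_num
  have e3 : v ^ (-(3/8) : ℝ) = v ^ (-(1/8) : ℝ) * v ^ (-(1/8) : ℝ) * v ^ (-(1/8) : ℝ) := by
    rw [← rpow_add hv, ← rpow_add hv]; norm_num
  have e4 : u ^ (-(3/4) : ℝ) = u ^ (-(1/4) : ℝ) * u ^ (-(1/4) : ℝ) * u ^ (-(1/4) : ℝ) := by
    rw [← rpow_add hu, ← rpow_add hu]; norm_num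
  rw [e1, e2, e3, e4]
  calc _ ≤ (2 * C0 * (v ^ (-(1/8) : ℝ) * u ^ (-(1/4) : ℝ)))^2 * (5 * (2 * C0 * (u ^ (-(1/8) : ℝ) * v ^ (-(1/4) : ℝ))) + 2 * C0 * (v ^ (-(1/8) : ℝ) * u ^ (-(1/4) : ℝ))) := by
        gcongr
    _ = _ := by ring

theorem phi_bound {x : ℝ} (y : ℝ) (h0 : x ≠ 0) (h1 : x ≠ 1) : ‖phi ⟨x, y⟩‖ ≤ Psi x := by
  refine le_trans (coef_bound _ _ _ _ (Kc_norm_le x y h1) ?_) (NN_Psi h0 h1)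
  have : (1 - ⟨x, y⟩ : ℂ) = ⟨1 - x, -y⟩ := by apply Complex.ext <;> simp
  rw [this]
  exact Kc_norm_le (1-x) (-y) (fun h => h0 (by linarith))

theorem Psi_far {x R : ℝ} (hR : 1 < R) (hx : |x| = R) : Psi x ≤ 48 * C0^3 * (R-1) ^ (-(9/8) : ℝ) := by
  have hp : 0 < R - 1 := by linarith
  have hu : R - 1 ≤ |x| := by linarith
  have hv : R - 1 ≤ |1 - x| := by
    have := abs_sub_abs_le_abs_sub x 1
    rw [abs_one, abs_sub_comm x 1] at this
    linarith
  have hC := C0_nonneg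
  have key : ∀ a b : ℝ, 0 ≤ a → 0 ≤ b → a + b = 9/8 → ww a b x ≤ (R-1) ^ (-(9/8) : ℝ) := by
    intro a b ha hb hab
    have h1 : |1 - x| ^ (-a) ≤ (R-1) ^ (-a) := rpow_le_rpow_of_nonpos hp hv (by linarith)
    have h2 : |x| ^ (-b) ≤ (R-1) ^ (-b) := rpow_le_rpow_of_nonpos hp hu (by linarith)
    calc ww a b x ≤ (R-1) ^ (-a) * (R-1) ^ (-b) := by unfold ww; gcongr
      _ = _ := by rw [← rpow_add hp]; congr 1; linarith
  have k1 := key (1/2) (5/8) (by norm_num) (by norm_num) (by norm_num)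
  have k2 := key (3/8) (3/4) (by norm_num) (by norm_num) (by norm_num)
  unfold Psi
  calc _ ≤ 8 * C0^3 * (5 * (R-1) ^ (-(9/8) : ℝ) + (R-1) ^ (-(9/8) : ℝ)) := by gcongr
    _ = _ := by ring

theorem Kc_far {m : ℂ} (hm : 0 < |m.im|) (h : |m.re| ≤ 2 * |m.im|) : ‖Kc m‖ ≤ (1/4 : ℝ) ^ (-(1/8) : ℝ) * C0 * |m.im| ^ (-(3/8) : ℝ) := by
  have e : (1/4 : ℝ) ^ (-(1/8) : ℝ) * C0 * |m.im| ^ (-(3/8) : ℝ) = ∫ θ in (0:ℝ)..(π/2), ((1/4 : ℝ) ^ (-(1/8) : ℝ) * |m.im| ^ (-(3/8) : ℝ)) * sin θ ^ (-(3/4) : ℝ) := by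
    rw [intervalIntegral.integral_const_mul, ← C0]; ring
  rw [e]
  refine intervalIntegral.norm_integral_le_of_norm_le (by positivity) ?_ (intble_sin.const_mul _)
  refine Eventually.of_forall fun θ hθ => ?_
  have hs := sin_pos' hθ
  have hs1 := sin_sq_le_one θ
  rw [kern_norm]
  have g1 := Complex.abs_re_le_norm (1 - m * ((sin θ ^ 2 : ℝ) : ℂ))
  have g2 := Complex.abs_im_le_norm (1 - m * ((sin θ ^ 2 : ℝ) : ℂ))
  rw [Complex.sub_re, Complex.re_mul_ofReal, Complex.one_re] at g1
  rw [Complex.sub_im, Complex.im_mul_ofReal, Complex.one_im, zero_sub, abs_neg, abs_mul, abs_of_nonneg (sq_nonneg (sin θ))] at g2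
  refine kernel_bound (by norm_num) hm hs ?_ g2
  by_cases hc : 1/4 ≤ |m.im| * sin θ ^ 2
  · exact hc.trans g2
  · push Not at hc
    have h3 := (abs_le.1 h).2
    have h4 : m.re * sin θ ^ 2 ≤ 2 * |m.im| * sin θ ^ 2 := by gcongr
    have := le_abs_self (1 - m.re * sin θ ^ 2)
    linarith

theorem phi_far {x R : ℝ} (hR : 1 < R) (hx : |x| ≤ R) : ‖phi ⟨x, -R⟩‖ ≤ 6 * ((1/4 : ℝ) ^ (-(1/8) : ℝ) * C0)^3 * (R-1) ^ (-(9/8) : ℝ) := by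
  have hRp : 0 < R := by linarith
  have habs : |(-R)| = R := by rw [abs_neg, abs_of_pos hRp]
  have h1 := Kc_far (m := ⟨x, -R⟩) (by simp only [habs]; exact hRp) (by simp only [habs]; linarith)
  have e : (1 - ⟨x, -R⟩ : ℂ) = ⟨1 - x, R⟩ := by apply Complex.ext <;> simp
  have hx2 : |1 - x| ≤ 2 * R := by
    have := abs_sub 1 x
    rw [abs_one] at this; linarith
  have h2 := Kc_far (m := ⟨1 - x, R⟩) (by simp only [abs_of_pos hRp]; exact hRp) (by simp only [abs_of_pos hRp]; exact hx2)
  simp only [habs] at h1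
  simp only [abs_of_pos hRp] at h2
  rw [← e] at h2
  refine (coef_bound _ _ _ _ h1 h2).trans ?_
  set D := (1/4 : ℝ) ^ (-(1/8) : ℝ) * C0
  have hD : 0 ≤ D := mul_nonneg (by positivity) C0_nonneg
  have e3 : (R ^ (-(3/8) : ℝ))^3 = R ^ (-(9/8) : ℝ) := by
    rw [← rpow_natCast, ← rpow_mul hRp.le]; norm_num
  calc _ = 6 * D^3 * (R ^ (-(3/8) : ℝ))^3 := by ring
    _ = 6 * D^3 * R ^ (-(9/8) : ℝ) := by rw [e3]
    _ ≤ _ := by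
      have : R ^ (-(9/8) : ℝ) ≤ (R-1) ^ (-(9/8) : ℝ) := rpow_le_rpow_of_nonpos (by linarith) (by linarith) (by norm_num)
      gcongr


theorem phi_diff {m : ℂ} (hm : m.im ≠ 0) : DifferentiableAt ℂ phi m := by
  obtain ⟨d, hd⟩ := hasDerivAt_Kc hm
  obtain ⟨d', hd'⟩ := hasDerivAt_Kc (m := 1 - m) (by simpa using hm)
  have h1 : DifferentiableAt ℂ Kc m := hd.differentiableAt
  have h2 : DifferentiableAt ℂ (fun m => Kc (1 - m)) m :=
    DifferentiableAt.comp m hd'.differentiableAt (by fun_prop)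
  unfold phi
  exact (h1.pow 2).mul ((h2.const_mul _).sub (h1.const_mul _))

theorem phi_line_cont {ε : ℝ} (hε : 0 < ε) : Continuous (fun x : ℝ => phi ⟨x, -ε⟩) := by
  rw [continuous_iff_continuousAt]
  intro x
  have h1 : ContinuousAt phi ⟨x, -ε⟩ := (phi_diff (by simp only; linarith [hε] : (⟨x, -ε⟩ : ℂ).im ≠ 0)).continuousAt
  have h2 : Continuous (fun x : ℝ => (⟨x, -ε⟩ : ℂ)) := by
    have : (fun x : ℝ => (⟨x, -ε⟩ : ℂ)) = fun x : ℝ => (x : ℂ) + ((-ε : ℝ) : ℂ) * Complex.I :=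
      funext fun x => Complex.mk_eq_add_mul_I _ _
    rw [this]; fun_prop
  exact ContinuousAt.comp (f := fun x : ℝ => (⟨x, -ε⟩ : ℂ)) h1 h2.continuousAt

theorem ae_ne01 : ∀ᵐ x : ℝ, x ≠ 0 ∧ x ≠ 1 := by
  have h1 : ∀ᵐ x : ℝ, x ≠ 0 := by simp [ae_iff, measure_singleton]
  have h2 : ∀ᵐ x : ℝ, x ≠ 1 := by simp [ae_iff, measure_singleton]
  filter_upwards [h1, h2] with x a b using ⟨a, b⟩

theorem phi_line_int {ε : ℝ} (hε : 0 < ε) : Integrable (fun x : ℝ => phi ⟨x, -ε⟩) := by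
  refine Psi_int.mono' (phi_line_cont hε).aestronglyMeasurable ?_
  filter_upwards [ae_ne01] with x hx
  exact phi_bound _ hx.1 hx.2

theorem contour_bound : ∃ C : ℝ, 0 ≤ C ∧ ∀ ε R : ℝ, 0 < ε → ε < 1 → 2 < R → ‖∫ x in (-R)..R, phi ⟨x, -ε⟩‖ ≤ C * (R-1) ^ (-(1/8) : ℝ) := by
  have hC := C0_nonneg
  set C1 := 48 * C0^3 + 6 * ((1/4 : ℝ) ^ (-(1/8) : ℝ) * C0)^3 with hC1
  have hC1p : 0 ≤ C1 := by positivity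
  refine ⟨C1 * 8, by positivity, fun ε R hε hε1 hR => ?_⟩
  have hp : 0 < (R-1) ^ (-(9/8) : ℝ) := rpow_pos_of_pos (by linarith) _
  set p := (R-1) ^ (-(9/8) : ℝ) with hpdef
  have H := Complex.integral_boundary_rect_eq_zero_of_differentiableOn phi ⟨-R, -R⟩ ⟨R, -ε⟩ (by
    intro m hm
    have him : m.im ∈ uIcc (-R) (-ε) := hm.2
    rw [uIcc_of_le (by linarith)] at him
    exact (phi_diff (by linarith [him.2] : m.im ≠ 0)).differentiableWithinAt)
  simp only [← Complex.mk_eq_add_mul_I] at H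
  have hq1 : 48 * C0^3 * p ≤ C1 * p := by
    have : 0 ≤ 6 * ((1/4 : ℝ) ^ (-(1/8) : ℝ) * C0)^3 * p := by positivity
    rw [hC1]; linarith
  have hq2 : 6 * ((1/4 : ℝ) ^ (-(1/8) : ℝ) * C0)^3 * p ≤ C1 * p := by
    have : 0 ≤ 48 * C0^3 * p := by positivity
    rw [hC1]; linarith
  have b1 : ‖∫ x in (-R)..R, phi ⟨x, -R⟩‖ ≤ C1 * p * |R - (-R)| := by
    refine intervalIntegral.norm_integral_le_of_norm_le_const fun x hx => ?_
    rw [uIoc_of_le (by linarith)] at hx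
    exact (phi_far (by linarith) (abs_le.2 ⟨hx.1.le, hx.2⟩)).trans hq2
  have b2 : ‖∫ y in (-R)..(-ε), phi ⟨R, y⟩‖ ≤ C1 * p * |-ε - (-R)| := by
    refine intervalIntegral.norm_integral_le_of_norm_le_const fun y _ => ?_
    exact ((phi_bound y (by linarith) (by linarith)).trans (Psi_far (R := R) (by linarith) (abs_of_pos (by linarith)))).trans hq1
  have b3 : ‖∫ y in (-R)..(-ε), phi ⟨-R, y⟩‖ ≤ C1 * p * |-ε - (-R)| := by
    refine intervalIntegral.norm_integral_le_of_norm_le_const fun y _ => ?_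
    exact ((phi_bound y (by linarith) (by linarith)).trans (Psi_far (R := R) (by linarith) (by rw [abs_neg, abs_of_pos (by linarith)]))).trans hq1
  rw [abs_of_pos (by linarith)] at b1 b2 b3
  have e : ∫ x in (-R)..R, phi ⟨x, -ε⟩ = (∫ x in (-R)..R, phi ⟨x, -R⟩) + Complex.I • (∫ y in (-R)..(-ε), phi ⟨R, y⟩) - Complex.I • (∫ y in (-R)..(-ε), phi ⟨-R, y⟩) := by
    linear_combination (-1 : ℂ) * H
  rw [e]
  have n : ∀ z : ℂ, ‖Complex.I • z‖ = ‖z‖ := by intro z; rw [norm_smul, Complex.norm_I, one_mul]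
  have hpp : (R-1) ^ (-(1/8) : ℝ) = (R-1) * p := by
    rw [hpdef, ← rpow_one_add' (by linarith) (by norm_num)]; norm_num
  rw [hpp]
  have t1 := norm_sub_le ((∫ x in (-R)..R, phi ⟨x, -R⟩) + Complex.I • (∫ y in (-R)..(-ε), phi ⟨R, y⟩)) (Complex.I • (∫ y in (-R)..(-ε), phi ⟨-R, y⟩))
  have t2 := norm_add_le (∫ x in (-R)..R, phi ⟨x, -R⟩) (Complex.I • (∫ y in (-R)..(-ε), phi ⟨R, y⟩))
  rw [n] at t1 t2
  have hcp : 0 ≤ C1 * p := by positivity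
  nlinarith

theorem G_zero {ε : ℝ} (hε : 0 < ε) (hε1 : ε < 1) : ∫ x : ℝ, phi ⟨x, -ε⟩ = 0 := by
  obtain ⟨C, hC, hb⟩ := contour_bound
  have h1 := MeasureTheory.intervalIntegral_tendsto_integral (phi_line_int hε) tendsto_neg_atTop_atBot (tendsto_id (α := ℝ) (x := atTop))
  have h2 : Tendsto (fun R : ℝ => ∫ x in (-R)..(id R), phi ⟨x, -ε⟩) atTop (𝓝 0) := by
    have ht : Tendsto (fun R : ℝ => C * (R-1) ^ (-(1/8) : ℝ)) atTop (𝓝 0) := by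
      have := ((tendsto_rpow_neg_atTop (y := 1/8) (by norm_num)).comp (tendsto_atTop_add_const_right atTop (-1:ℝ) tendsto_id)).const_mul C
      rw [mul_zero] at this
      exact this
    refine squeeze_zero_norm' ?_ ht
    filter_upwards [eventually_gt_atTop 2] with R hR
    exact hb ε R hε hε1 hR
  exact tendsto_nhds_unique h1 h2

noncomputable def bphi (x : ℝ) : ℂ := Kc x ^ 2 * ((3 - 2 * Complex.I) * (starRingEnd ℂ) (Kc ((1 - x : ℝ) : ℂ)) - Complex.I * Kc x)

theorem phi_tendsto {x : ℝ} (h0 : x ≠ 0) (h1 : x ≠ 1) : Tendsto (fun ε : ℝ => phi ⟨x, -ε⟩) (𝓝[>] 0) (𝓝 (bphi x)) := by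
  unfold phi bphi
  exact ((Kc_tendsto h1).pow 2).mul (((Kc_tendsto' h0).const_mul _).sub ((Kc_tendsto h1).const_mul _))

theorem bphi_int : Integrable bphi ∧ ∫ x, bphi x = 0 := by
  have hlim : ∀ᵐ x : ℝ, Tendsto (fun ε : ℝ => phi ⟨x, -ε⟩) (𝓝[>] 0) (𝓝 (bphi x)) := by
    filter_upwards [ae_ne01] with x hx using phi_tendsto hx.1 hx.2
  have hseq : Tendsto (fun n : ℕ => (1 / ((n:ℝ) + 1))) atTop (𝓝[>] 0) := by
    rw [tendsto_nhdsWithin_iff]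
    exact ⟨tendsto_one_div_add_atTop_nhds_zero_nat, Eventually.of_forall fun n => by simp only [mem_Ioi]; positivity⟩
  have hm : AEStronglyMeasurable bphi volume :=
    aestronglyMeasurable_of_tendsto_ae (f := fun (n : ℕ) (x : ℝ) => phi ⟨x, -(1 / ((n:ℝ) + 1))⟩) atTop
      (fun n => (phi_line_cont (by positivity)).aestronglyMeasurable)
      (by filter_upwards [hlim] with x hx using hx.comp hseq)
  constructor
  · refine Psi_int.mono' hm ?_
    filter_upwards [ae_ne01, hlim] with x hx hl
    exact le_of_tendsto hl.norm (Eventually.of_forall fun ε => phi_bound _ hx.1 hx.2)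
  · have h : Tendsto (fun ε : ℝ => ∫ x : ℝ, phi ⟨x, -ε⟩) (𝓝[>] 0) (𝓝 (∫ x, bphi x)) := by
      refine MeasureTheory.tendsto_integral_filter_of_dominated_convergence Psi ?_ ?_ Psi_int hlim
      · filter_upwards [self_mem_nhdsWithin] with ε hε
        exact (phi_line_cont hε).aestronglyMeasurable
      · refine Eventually.of_forall fun ε => ?_
        filter_upwards [ae_ne01] with x hx using phi_bound _ hx.1 hx.2
    have h0 : Tendsto (fun ε : ℝ => ∫ x : ℝ, phi ⟨x, -ε⟩) (𝓝[>] 0) (𝓝 0) := by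
      refine tendsto_const_nhds.congr' ?_
      filter_upwards [Ioo_mem_nhdsGT (zero_lt_one' ℝ)] with ε hε
      exact (G_zero hε.1 hε.2).symm
    exact tendsto_nhds_unique h h0

theorem re_neg {x : ℝ} (hx : x < 0) : (bphi x).re = yy (-x) ^ 2 * (3 * qq 0 (-x) + 2 * yy (-x)) := by
  have h1 : Kc x = (yy (-x) : ℂ) := by rw [(kern_lt (by linarith)).2.1, ← KR_neg, neg_neg]
  have h2 := (kern_gt (M := 1 - x) (by linarith)).2.1
  rw [show 1 - x - 1 = -x by ring] at h2
  rw [bphi, h1, h2]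
  simp [pow_two]

theorem re_mid {x : ℝ} (hx : x ∈ Ioo (0:ℝ) 1) : (bphi x).re = 3 * (KR x ^ 2 * KR (1 - x)) := by
  have h1 := (kern_lt hx.2).2.1
  have h2 := (kern_lt (x := 1 - x) (by linarith [hx.1])).2.1
  rw [bphi, h1, h2]
  simp [pow_two]
  ring

theorem re_gt {x : ℝ} (hx : 1 < x) : (bphi x).re = -2 * yy (x-1)^3 - 4 * (yy (x-1)^2 * qq 0 (x-1)) := by
  have h1 := (kern_gt hx).2.1
  have h2 : Kc ((1 - x : ℝ) : ℂ) = (yy (x-1) : ℂ) := by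
    rw [(kern_lt (by linarith)).2.1, ← KR_neg, neg_sub]
  rw [bphi, h1, h2]
  simp [pow_two]
  ring

theorem yy3_int : IntegrableOn (fun z => yy z ^ 3) (Ioi 0) := by
  have h := (intOn_gen (a := 9/8) (b := 0) (by norm_num) le_rfl (by norm_num) (by norm_num)).const_mul (C0^3)
  refine h.mono' ((contOn_yy.pow 3).aestronglyMeasurable measurableSet_Ioi) ?_
  refine (ae_restrict_iff' measurableSet_Ioi).2 (Eventually.of_forall fun z hz => ?_)
  have hz0 : 0 < z := hz
  have h3 := yy_nonneg hz
  have h1 := yy_le hz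
  rw [norm_of_nonneg (by positivity), neg_zero, rpow_zero, one_mul, ← rpow_comb hz]
  calc yy z ^ 3 ≤ ((1 + z) ^ (-(3/8) : ℝ) * C0)^3 := by gcongr
    _ = _ := by ring

theorem main_id : 3 * ∫ x in (0:ℝ)..1, KR x ^ 2 * KR (1 - x) = JJ 0 := by
  obtain ⟨hi, h0⟩ := bphi_int
  have hre : Integrable (fun x => (bphi x).re) := hi.re
  have h0' : ∫ x, (bphi x).re = 0 := by
    have := integral_re hi
    simp only [RCLike.re_eq_complex_re] at this
    rw [this, h0]; rfl
  have hs1 : ∫ x, (bphi x).re = (∫ x in Iic (0:ℝ), (bphi x).re) + ∫ x in Ioi (0:ℝ), (bphi x).re :=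
    (intervalIntegral.integral_Iic_add_Ioi hre.integrableOn hre.integrableOn).symm
  have hs2 : ∫ x in Ioi (0:ℝ), (bphi x).re = (∫ x in Ioc (0:ℝ) 1, (bphi x).re) + ∫ x in Ioi (1:ℝ), (bphi x).re := by
    rw [← Ioc_union_Ioi_eq_Ioi (zero_le_one' ℝ)]
    exact setIntegral_union (Set.Ioc_disjoint_Ioi le_rfl) measurableSet_Ioi hre.integrableOn hre.integrableOn
  have p1 : ∫ x in Iic (0:ℝ), (bphi x).re = ∫ z in Ioi (0:ℝ), (3 * (yy z ^ 2 * qq 0 z) + 2 * yy z ^ 3) := by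
    have := integral_comp_neg_Iic 0 (fun z => 3 * (yy z ^ 2 * qq 0 z) + 2 * yy z ^ 3)
    rw [neg_zero] at this
    rw [← this, integral_Iic_eq_integral_Iio, integral_Iic_eq_integral_Iio]
    refine setIntegral_congr_fun measurableSet_Iio (fun x hx => ?_)
    beta_reduce
    rw [re_neg hx]; ring
  have p2 : ∫ x in Ioc (0:ℝ) 1, (bphi x).re = 3 * ∫ x in (0:ℝ)..1, KR x ^ 2 * KR (1 - x) := by
    rw [intervalIntegral.integral_of_le zero_le_one, integral_Ioc_eq_integral_Ioo, integral_Ioc_eq_integral_Ioo, ← MeasureTheory.integral_const_mul]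
    exact setIntegral_congr_fun measurableSet_Ioo (fun x hx => re_mid hx)
  have p3 : ∫ x in Ioi (1:ℝ), (bphi x).re = ∫ z in Ioi (0:ℝ), (-2 * yy z ^ 3 - 4 * (yy z ^ 2 * qq 0 z)) := by
    have := (measurePreserving_sub_right volume (1:ℝ)).setIntegral_preimage_emb (MeasurableEquiv.subRight (1:ℝ)).measurableEmbedding
      (fun z => -2 * yy z ^ 3 - 4 * (yy z ^ 2 * qq 0 z)) (Ioi 0)
    rw [← this]
    have hs : (fun x : ℝ => x - 1) ⁻¹' Ioi 0 = Ioi 1 := by ext x; simp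
    rw [hs]
    exact setIntegral_congr_fun measurableSet_Ioi (fun x hx => re_gt hx)
  have iy := yy3_int
  have iq := intOn_yyqq 0
  have q1 : ∫ z in Ioi (0:ℝ), (3 * (yy z ^ 2 * qq 0 z) + 2 * yy z ^ 3) = 3 * JJ 0 + 2 * ∫ z in Ioi (0:ℝ), yy z ^ 3 := by
    rw [MeasureTheory.integral_add (iq.const_mul 3) (iy.const_mul 2), MeasureTheory.integral_const_mul, MeasureTheory.integral_const_mul, JJ]
  have q3 : ∫ z in Ioi (0:ℝ), (-2 * yy z ^ 3 - 4 * (yy z ^ 2 * qq 0 z)) = -2 * (∫ z in Ioi (0:ℝ), yy z ^ 3) - 4 * JJ 0 := by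
    rw [MeasureTheory.integral_sub (iy.const_mul (-2)) (iq.const_mul 4), MeasureTheory.integral_const_mul, MeasureTheory.integral_const_mul, JJ]
  linarith

theorem ellipticK_sqrt {t : ℝ} (ht : 0 ≤ t) : ellipticK (Real.sqrt t) = KR t := by
  unfold ellipticK KR
  rw [Real.sq_sqrt ht]

theorem final_id :
    2 * ∫ t in (0:ℝ)..1, (ellipticK (Real.sqrt (1-t)))^2 * ellipticK (Real.sqrt t)
      = (Real.Gamma (1/4))^8 / (192 * π^2) := by
  have h1 : ∫ t in (0:ℝ)..1, (ellipticK (Real.sqrt (1-t)))^2 * ellipticK (Real.sqrt t)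
      = ∫ t in (0:ℝ)..1, KR (1 - t) ^ 2 * KR (1 - (1 - t)) := by
    refine intervalIntegral.integral_congr (fun t ht => ?_)
    rw [Set.uIcc_of_le zero_le_one] at ht
    show ellipticK (Real.sqrt (1-t)) ^ 2 * ellipticK (Real.sqrt t) = KR (1 - t) ^ 2 * KR (1 - (1 - t))
    rw [ellipticK_sqrt ht.1, ellipticK_sqrt (by linarith [ht.2]), sub_sub_cancel]
  have h2 := intervalIntegral.integral_comp_sub_left (a := 0) (b := 1)
    (fun x => KR x ^ 2 * KR (1 - x)) 1
  rw [sub_self, sub_zero] at h2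
  have h3 := main_id
  rw [JJ_zero] at h3
  rw [h1, h2]
  have h4 : Real.Gamma (1/4) ^ 8 / (192 * π ^ 2)
      = 2 / 3 * (Real.Gamma (1/4) ^ 8 / (128 * π ^ 2)) := by
    field_simp
    norm_num
  rw [h4, ← h3]
  ring

end helpers

theorem stmt_7 :
    2 * ∫ t in (0:ℝ)..1, (ellipticK (Real.sqrt (1-t)))^2 * ellipticK (Real.sqrt t)
      = (Real.Gamma (1/4))^8 / (192 * π^2) := by
  exact final_id
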